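/- arXiv:1308.5392 — 2 statements merged into one kernel-verified Lean document; each statement's English description precedes it below -/
import Mathlib

section
/- For every number field F of degree d ≥ 2 over ℚ, the class number h_F satisfies h_F ≤ (2/π)^{r₂} · √D_F · (d - 1 + log D_F)^{d-1} / (d-1)!, where D_F is the absolute discriminant and r₂ the number of pairs of complex embeddings. In particular h_F ≪_d √D_F (log √D_F)^{d-1}. -/
open NumberField

/-!
Put `M = (2 / π) ^ r₂ * √|D|`. Since `d ! / d ^ d ≤ (1 / 2) ^ (d - 1) ≤ (1 / 2) ^ r₂`, Minkowski's
theorem puts an integral ideal of norm at most `M` in every ideal class, so it suffices to count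
these ideals. At most `d` primes lie above each rational prime, hence the primes can be labelled by
`Fin d` so that distinct primes with the same label have coprime norms. Sorting the prime factors
of an ideal of norm `m` by label and taking norms factors `m` into `d` ordered factors, and
this factorisation determines the ideal. There are `(ζ ^ d) m` such factorisations, and induction
on `d` through `ζ ^ (d + 1) = ζ * ζ ^ d` gives
`∑ m ≤ N, (ζ ^ d) m ≤ N * (d - 1 + log N) ^ (d - 1) / (d - 1)!`.
-/

section DivisorFunctions

open Finset ArithmeticFunction
open Nat (finMulAntidiag mem_finMulAntidiag)
open scoped Nat ArithmeticFunction.zeta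

lemma one_div_add_one_le_log_sub_log {k : ℕ} (hk : 0 < k) :
    1 / ((k + 1 : ℕ) : ℝ) ≤ Real.log (k + 1 : ℕ) - Real.log k := by
  have h := Real.one_sub_inv_le_log_of_pos (x := ((k + 1 : ℕ) : ℝ) / k) (by positivity)
  rw [Real.log_div (by positivity) (by positivity)] at h
  convert h using 1
  push_cast
  field_simp
  ring

/- Bernoulli's inequality `(n + 1) * v ^ n * (u - v) ≤ u ^ (n + 1) - v ^ (n + 1)`, applied to
`u = b - log N` and `v = b - log (N + 1)`, makes the sum telescope; it replaces a comparison with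
the integral of `(b - log x) ^ n / x`. -/
lemma sum_Ioc_sub_log_pow_div_add_le (n : ℕ) {b : ℝ} {N : ℕ} (hN : 1 ≤ N) (hb : Real.log N ≤ b) :
    (n + 1) * ∑ k ∈ Ioc 0 N, (b - Real.log k) ^ n / k + (b - Real.log N) ^ (n + 1)
      ≤ (b + 1) ^ (n + 1) := by
  have bernoulli {v w : ℝ} (hv : 0 ≤ v) (hw : 0 ≤ w) :
      (n + 1) * (v ^ n * w) + v ^ (n + 1) ≤ (v + w) ^ (n + 1) := by
    have := pow_add_mul_le_add_pow hv (by positivity : 0 ≤ 2 * v + w) (n + 1)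
    push_cast [Nat.add_sub_cancel] at this
    linarith
  induction N, hN using Nat.le_induction with
  | base => simpa using bernoulli (by simpa using hb) zero_le_one
  | succ N hN ih =>
    have hgap := one_div_add_one_le_log_sub_log hN
    have hgap_pos : 0 ≤ 1 / ((N + 1 : ℕ) : ℝ) := by positivity
    set v := b - Real.log (N + 1 : ℕ) with hv
    have hv_nonneg : 0 ≤ v := sub_nonneg.mpr hb
    calc (n + 1) * ∑ k ∈ Ioc 0 (N + 1), (b - Real.log k) ^ n / k + v ^ (n + 1)
        = (n + 1) * ∑ k ∈ Ioc 0 N, (b - Real.log k) ^ n / k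
            + ((n + 1) * (v ^ n * (1 / ((N + 1 : ℕ) : ℝ))) + v ^ (n + 1)) := by
          rw [sum_Ioc_succ_top N.zero_le, ← hv]
          ring
      _ ≤ (n + 1) * ∑ k ∈ Ioc 0 N, (b - Real.log k) ^ n / k + (b - Real.log N) ^ (n + 1) := by
          gcongr
          refine (bernoulli hv_nonneg hgap_pos).trans ?_
          gcongr
          linarith
      _ ≤ (b + 1) ^ (n + 1) := ih (by linarith)

lemma sum_Ioc_sub_log_pow_div_le (n : ℕ) {b : ℝ} {N : ℕ} (hN : 1 ≤ N) (hb : Real.log N ≤ b) :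
    ∑ k ∈ Ioc 0 N, (b - Real.log k) ^ n / k ≤ (b + 1) ^ (n + 1) / (n + 1) := by
  rw [le_div_iff₀' (by positivity)]
  have : 0 ≤ (b - Real.log N) ^ (n + 1) := pow_nonneg (sub_nonneg.mpr hb) _
  linarith [sum_Ioc_sub_log_pow_div_add_le n hN hb]

theorem sum_Ioc_zeta_pow_le (n N : ℕ) :
    ((∑ m ∈ Ioc 0 N, (ζ ^ (n + 1) : ArithmeticFunction ℕ) m : ℕ) : ℝ) ≤
      N * (n + Real.log N) ^ n / n ! := by
  induction n generalizing N with
  | zero =>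
    simp only [zero_add, pow_one, sum_Ioc_zeta]
    simp
  | succ n ih =>
    obtain rfl | hN := N.eq_zero_or_pos
    · simp
    have quotient_bound {k : ℕ} (hk : k ∈ Ioc 0 N) :
        ((ζ k * ∑ m ∈ Ioc 0 (N / k), (ζ ^ (n + 1) : ArithmeticFunction ℕ) m : ℕ) : ℝ) ≤
          N / n ! * ((n + Real.log N - Real.log k) ^ n / k) := by
      obtain ⟨hk_pos, hkN⟩ := mem_Ioc.mp hk
      have hquot : 0 < N / k := Nat.div_pos hkN hk_pos
      have hlog : Real.log (N / k : ℕ) ≤ Real.log N - Real.log k := by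
        rw [← Real.log_div (by positivity) (by positivity)]
        exact Real.log_le_log (by positivity) Nat.cast_div_le
      rw [zeta_apply_ne hk_pos.ne', one_mul]
      calc ((∑ m ∈ Ioc 0 (N / k), (ζ ^ (n + 1) : ArithmeticFunction ℕ) m : ℕ) : ℝ)
          ≤ (N / k : ℕ) * (n + Real.log (N / k : ℕ)) ^ n / n ! := ih (N / k)
        _ ≤ (N / k) * (n + (Real.log N - Real.log k)) ^ n / n ! := by
            gcongr
            exact Nat.cast_div_le
        _ = N / n ! * ((n + Real.log N - Real.log k) ^ n / k) := by ring
    rw [pow_succ', sum_Ioc_mul_eq_sum_sum, Nat.cast_sum]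
    calc ∑ k ∈ Ioc 0 N,
          ((ζ k * ∑ m ∈ Ioc 0 (N / k), (ζ ^ (n + 1) : ArithmeticFunction ℕ) m : ℕ) : ℝ)
        ≤ ∑ k ∈ Ioc 0 N, N / n ! * ((n + Real.log N - Real.log k) ^ n / k) :=
          sum_le_sum fun k hk => quotient_bound hk
      _ = N / n ! * ∑ k ∈ Ioc 0 N, (n + Real.log N - Real.log k) ^ n / k := by
          rw [mul_sum]
      _ ≤ N / n ! * ((n + Real.log N + 1) ^ (n + 1) / (n + 1)) := by
          gcongr
          exact sum_Ioc_sub_log_pow_div_le n hN (by simp)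
      _ = N * ((n + 1 : ℕ) + Real.log N) ^ (n + 1) / (n + 1)! := by
          rw [Nat.factorial_succ]
          push_cast
          field_simp
          ring

lemma pow_apply_eq_sum_finMulAntidiag {R : Type*} [CommSemiring R] (f : ArithmeticFunction R)
    (d m : ℕ) : (f ^ d) m = ∑ x ∈ finMulAntidiag d m, ∏ i, f (x i) := by
  induction d generalizing m with
  | zero =>
    obtain rfl | hm := eq_or_ne m 1
    · simp [Nat.finMulAntidiag_one]
    · simp [Nat.finMulAntidiag_zero_left hm, one_apply_ne hm]
  | succ d ih =>
    simp only [pow_succ', mul_apply, ih, mul_sum, Fin.prod_univ_succ]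
    rw [sum_sigma']
    refine sum_nbij' (fun y => Fin.cons y.1.1 y.2)
      (fun x => ⟨(x 0, ∏ i : Fin d, x i.succ), Fin.tail x⟩) (fun y hy => ?_) (fun x hx => ?_)
      (fun y hy => ?_) (fun x _ => Fin.cons_self_tail x) (fun y _ => by simp)
    · simp only [mem_sigma, Nat.mem_divisorsAntidiagonal, mem_finMulAntidiag] at hy
      simpa [Fin.prod_univ_succ, hy.2.1] using hy.1
    · simp only [mem_finMulAntidiag, Fin.prod_univ_succ] at hx
      have tail_ne_zero : ∏ i : Fin d, x i.succ ≠ 0 := right_ne_zero_of_mul (hx.1 ▸ hx.2)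
      simpa [Fin.tail, tail_ne_zero] using hx
    · simp only [mem_sigma, mem_finMulAntidiag] at hy
      simp [hy.2.1]

lemma card_finMulAntidiag_eq_zeta_pow (d m : ℕ) :
    #(finMulAntidiag d m) = (ζ ^ d : ArithmeticFunction ℕ) m := by
  rw [pow_apply_eq_sum_finMulAntidiag, card_eq_sum_ones]
  refine sum_congr rfl fun x hx => (prod_eq_one fun i _ => ?_).symm
  exact zeta_apply_ne (Nat.ne_zero_of_mem_finMulAntidiag hx i)

end DivisorFunctions

lemma prod_map_injective_of_coprime {α ι : Type*} {g : α → ι → ℕ} (hpos : ∀ a i, 0 < g a i)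
    (hcop : ∀ a, ∃ i, g a i ≠ 1 ∧ ∀ b, a ≠ b → (g a i).Coprime (g b i)) :
    Function.Injective fun s : Multiset α => (s.map g).prod := by
  classical
  have mem_of_dvd {a : α} {t : Multiset α} (h : g a ∣ (t.map g).prod) : a ∈ t := by
    obtain ⟨i, hi, hai⟩ := hcop a
    obtain ⟨p, hp, hpa⟩ := Nat.exists_prime_and_dvd hi
    have hpt : p ∣ (t.map fun b => g b i).prod := by
      simpa [Pi.multiset_prod_apply] using hpa.trans (pi_dvd_iff.mp h i)
    obtain ⟨b, hbt, hpb⟩ := hp.prime.exists_mem_multiset_map_dvd hpt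
    by_contra hat
    exact Nat.not_coprime_of_dvd_of_dvd hp.one_lt hpa hpb (hai b fun hab => hat (hab ▸ hbt))
  intro s
  induction s using Multiset.induction_on with
  | empty =>
    intro t ht
    refine (Multiset.eq_zero_of_forall_notMem fun a hat => ?_).symm
    refine Multiset.notMem_zero a (mem_of_dvd ?_)
    exact (Multiset.dvd_prod (Multiset.mem_map_of_mem g hat)).trans (dvd_of_eq ht.symm)
  | cons a s ih =>
    intro t ht
    obtain ⟨t, rfl⟩ := Multiset.exists_cons_of_mem <| mem_of_dvd (t := t) (a := a) (by
      simp only [← ht, Multiset.map_cons, Multiset.prod_cons, dvd_mul_right])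
    simp only [Multiset.map_cons, Multiset.prod_cons] at ht
    have : (s.map g).prod = (t.map g).prod :=
      funext fun i => Nat.eq_of_mul_eq_mul_left (hpos a i) (congrFun ht i)
    rw [ih this]

lemma exists_fin_label_of_encard_fiber_le {α β : Type*} (f : α → β) {d : ℕ}
    (hf : ∀ b, (f ⁻¹' {b}).encard ≤ d) :
    ∃ l : α → Fin d, ∀ a a', f a = f a' → l a = l a' → a = a' := by
  have fiber_embedding (b : β) : Nonempty (f ⁻¹' {b} ↪ Fin d) := by
    have hfin : (f ⁻¹' {b}).Finite := Set.finite_of_encard_le_coe (hf b)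
    have := hfin.to_subtype
    have card_le := hf b
    rw [← hfin.cast_ncard_eq, Nat.cast_le, ← Nat.card_coe_set_eq] at card_le
    exact ⟨(Finite.equivFin _).toEmbedding.trans (Fin.castLEEmb card_le)⟩
  obtain ⟨e⟩ := Classical.nonempty_pi.mpr fiber_embedding
  refine ⟨fun a => e (f a) ⟨a, rfl⟩, fun a a' haa' hl => ?_⟩
  have e_transport {b : β} (hb : f a' = b) : e (f a') ⟨a', rfl⟩ = e b ⟨a', hb⟩ := by
    subst hb
    rfl
  have : e (f a) ⟨a, rfl⟩ = e (f a) ⟨a', haa'.symm⟩ := hl.trans (e_transport haa'.symm)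
  exact congrArg Subtype.val ((e (f a)).injective this)

section Ideals

open Finset ArithmeticFunction
open Nat (mem_finMulAntidiag)
open IsDedekindDomain (HeightOneSpectrum)
open scoped Nat ArithmeticFunction.zeta

variable {R : Type*} [CommRing R] [IsDedekindDomain R]

lemma exists_multiset_prod_asIdeal_eq {I : Ideal R} (hI : I ≠ ⊥) :
    ∃ s : Multiset (HeightOneSpectrum R), (s.map HeightOneSpectrum.asIdeal).prod = I := by
  obtain ⟨s, hs, hsI⟩ := UniqueFactorizationMonoid.exists_prime_factors I hI
  refine ⟨s.pmap (fun _ => .ofPrime) hs, ?_⟩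
  rw [← associated_iff_eq]
  simpa [Multiset.map_pmap, Multiset.pmap_eq_map] using hsI

variable [Module.Free ℤ R] [Module.Finite ℤ R]

lemma under_eq_of_not_coprime_absNorm (P Q : HeightOneSpectrum R)
    (h : ¬ (Ideal.absNorm P.asIdeal).Coprime (Ideal.absNorm Q.asIdeal)) :
    P.asIdeal.under ℤ = Q.asIdeal.under ℤ := by
  have under_prime (P : HeightOneSpectrum R) : (Ideal.absNorm (P.asIdeal.under ℤ)).Prime :=
    have := NeZero.mk P.ne_bot
    Nat.absNorm_under_prime P.asIdeal
  have absNorm_eq (P : HeightOneSpectrum R) :=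
    Ideal.absNorm_eq_pow_inertiaDeg'_of_liesOver P.asIdeal (P.asIdeal.under ℤ) inferInstance
      (Ideal.under_ne_bot ℤ P.ne_bot)
  contrapose! h
  rw [absNorm_eq P, absNorm_eq Q]
  suffices Ideal.absNorm (P.asIdeal.under ℤ) ≠ Ideal.absNorm (Q.asIdeal.under ℤ) from
    Nat.Coprime.pow _ _ ((Nat.coprime_primes (under_prime P) (under_prime Q)).mpr this)
  refine fun heq => h ?_
  rw [← Int.ideal_span_absNorm_eq_self (P.asIdeal.under ℤ), heq, Int.ideal_span_absNorm_eq_self]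

lemma ncard_primesOver_le_finrank (p : Ideal ℤ) [p.IsPrime] :
    (p.primesOver R).ncard ≤ Module.finrank ℤ R := by
  classical
  have : Fintype (p.primesOver R) := (Algebra.QuasiFinite.finite_primesOver p).fintype
  rw [← Ideal.sum_ramification_inertia_eq_finrank p R, ← Nat.card_coe_set_eq,
    Nat.card_eq_fintype_card, Fintype.card_eq_sum_ones]
  gcongr with P
  have := P.2.1
  exact Nat.mul_pos (P.1.ramificationIdx_pos ℤ) (P.1.inertiaDeg_pos ℤ)

lemma encard_under_fiber_le_finrank (p : Ideal ℤ) :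
    ((fun P : HeightOneSpectrum R => P.asIdeal.under ℤ) ⁻¹' {p}).encard ≤ Module.finrank ℤ R := by
  obtain hempty | ⟨P, rfl⟩ := Set.eq_empty_or_nonempty
    ((fun P : HeightOneSpectrum R => P.asIdeal.under ℤ) ⁻¹' {p})
  · simp [hempty]
  · have := P.isPrime
    have hfin : ((P.asIdeal.under ℤ).primesOver R).Finite :=
      Algebra.QuasiFinite.finite_primesOver _
    calc _ ≤ ((P.asIdeal.under ℤ).primesOver R).encard :=
          Set.encard_le_encard_of_injOn (f := HeightOneSpectrum.asIdeal)
            (fun Q hQ => ⟨Q.isPrime, ⟨hQ.symm⟩⟩) HeightOneSpectrum.asIdeal_injective.injOn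
      _ ≤ Module.finrank ℤ R := by
          rw [← hfin.cast_ncard_eq]
          exact_mod_cast ncard_primesOver_le_finrank _

lemma exists_label_coprime_absNorm :
    ∃ l : HeightOneSpectrum R → Fin (Module.finrank ℤ R), ∀ P Q, P ≠ Q → l P = l Q →
      (Ideal.absNorm P.asIdeal).Coprime (Ideal.absNorm Q.asIdeal) := by
  obtain ⟨l, hl⟩ := exists_fin_label_of_encard_fiber_le
    (fun P : HeightOneSpectrum R => P.asIdeal.under ℤ) encard_under_fiber_le_finrank
  refine ⟨l, fun P Q hPQ hlPQ => ?_⟩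
  contrapose! hPQ
  exact hl P Q (under_eq_of_not_coprime_absNorm P Q hPQ) hlPQ

open Ideal in
theorem ncard_absNorm_eq_le_zeta_pow {m : ℕ} (hm : m ≠ 0) :
    {I : Ideal R | absNorm I = m}.ncard ≤
      (ζ ^ Module.finrank ℤ R : ArithmeticFunction ℕ) m := by
  classical
  obtain ⟨l, hl⟩ := exists_label_coprime_absNorm (R := R)
  let g (P : HeightOneSpectrum R) : Fin (Module.finrank ℤ R) → ℕ :=
    Pi.mulSingle (l P) (absNorm P.asIdeal)
  have hg_pos (P : HeightOneSpectrum R) (i) : 0 < g P i := by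
    obtain rfl | hi := eq_or_ne i (l P)
    · simpa [g, Nat.pos_iff_ne_zero, absNorm_eq_zero_iff] using P.ne_bot
    · simp [g, hi]
  have hg_ne_one (P : HeightOneSpectrum R) : g P (l P) ≠ 1 := by
    simpa [g] using P.isPrime.ne_top
  have hg_coprime (P Q : HeightOneSpectrum R) (hPQ : P ≠ Q) :
      (g P (l P)).Coprime (g Q (l P)) := by
    obtain hlPQ | hlPQ := eq_or_ne (l P) (l Q)
    · simpa [g, ← hlPQ] using hl P Q hPQ hlPQ
    · simp [g, hlPQ]
  have hg_inj :=
    prod_map_injective_of_coprime hg_pos fun P => ⟨l P, hg_ne_one P, hg_coprime P⟩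
  have ne_bot {I : Ideal R} (hI : absNorm I = m) : I ≠ ⊥ := by
    rintro rfl
    exact hm (by simpa using hI.symm)
  have hg_prod (s : Multiset (HeightOneSpectrum R)) :
      ∏ i, (s.map g).prod i = absNorm (s.map HeightOneSpectrum.asIdeal).prod := by
    simp only [Pi.multiset_prod_apply, Multiset.map_map, Function.comp_def, map_multiset_prod]
    rw [← Multiset.prod_map_prod]
    simp only [g, Fintype.prod_pi_mulSingle']
  choose! s hs using fun I : Ideal R => exists_multiset_prod_asIdeal_eq (I := I)
  rw [← card_finMulAntidiag_eq_zeta_pow, ← Set.ncard_coe_finset]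
  refine Set.ncard_le_ncard_of_injOn (fun I => ((s I).map g).prod) (fun I hI => ?_)
    (fun I hI J hJ h => ?_)
  · rw [mem_coe, mem_finMulAntidiag, hg_prod, hs I (ne_bot hI)]
    exact ⟨hI, hm⟩
  · rw [← hs I (ne_bot hI), ← hs J (ne_bot hJ), hg_inj h]

variable (R)

open Ideal in
lemma ncard_absNorm_le_le_sum_zeta_pow (N : ℕ) :
    {I : Ideal R | I ≠ ⊥ ∧ absNorm I ≤ N}.ncard ≤
      ∑ m ∈ Ioc 0 N, (ζ ^ Module.finrank ℤ R : ArithmeticFunction ℕ) m := by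
  have fibers : {I : Ideal R | I ≠ ⊥ ∧ absNorm I ≤ N} =
      ⋃ m ∈ Ioc 0 N, {I : Ideal R | absNorm I = m} := by
    ext I
    simp [Nat.pos_iff_ne_zero, absNorm_eq_zero_iff]
  rw [fibers]
  refine (Finset.set_ncard_biUnion_le _ _).trans (sum_le_sum fun m hm => ?_)
  exact ncard_absNorm_eq_le_zeta_pow (mem_Ioc.mp hm).1.ne'

theorem ncard_absNorm_le_le {X : ℝ} (hX : 1 ≤ X) :
    ({I : Ideal R | I ≠ ⊥ ∧ (Ideal.absNorm I : ℝ) ≤ X}.ncard : ℝ) ≤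
      X * ((Module.finrank ℤ R - 1 : ℕ) + Real.log X) ^ (Module.finrank ℤ R - 1) /
        (Module.finrank ℤ R - 1)! := by
  have hX_floor : 0 < ⌊X⌋₊ := Nat.floor_pos.mpr hX
  have floor_le : (⌊X⌋₊ : ℝ) ≤ X := Nat.floor_le (by positivity)
  have finrank_eq : Module.finrank ℤ R - 1 + 1 = Module.finrank ℤ R :=
    Nat.sub_add_cancel Module.finrank_pos
  have hcount := ncard_absNorm_le_le_sum_zeta_pow R ⌊X⌋₊
  simp_rw [Nat.le_floor_iff (zero_le_one.trans hX)] at hcount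
  rw [← finrank_eq] at hcount
  refine ((Nat.cast_le.mpr hcount).trans (sum_Ioc_zeta_pow_le _ _)).trans ?_
  gcongr

end Ideals

section NumberField

open InfinitePlace
open scoped nonZeroDivisors Nat

lemma factorial_succ_mul_two_pow_le (n : ℕ) : (n + 1)! * 2 ^ n ≤ (n + 1) ^ (n + 1) := by
  induction n with
  | zero => simp
  | succ n ih =>
    have bernoulli : 2 * (n + 1) ^ (n + 1) ≤ (n + 2) ^ (n + 1) := by
      have : (n + 1) ^ (n + 1) + (n + 1) * (n + 1) ^ n * 1 ≤ (n + 1 + 1) ^ (n + 1) :=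
        pow_add_mul_le_add_pow (by positivity) (by positivity) (n + 1)
      calc 2 * (n + 1) ^ (n + 1) = (n + 1) ^ (n + 1) + (n + 1) * (n + 1) ^ n * 1 := by ring
        _ ≤ (n + 2) ^ (n + 1) := this
    calc (n + 2)! * 2 ^ (n + 1) = 2 * ((n + 1)! * 2 ^ n) * (n + 2) := by
          rw [Nat.factorial_succ]
          ring
      _ ≤ 2 * (n + 1) ^ (n + 1) * (n + 2) := by gcongr
      _ ≤ (n + 2) ^ (n + 1) * (n + 2) := by gcongr
      _ = (n + 2) ^ (n + 2) := (pow_succ _ _).symm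

variable (K : Type*) [Field K] [NumberField K]

/-- The constant `(2 / π) ^ r₂ * √|D|`, a weakening of Minkowski's bound on the least norm of an
integral ideal in an ideal class. The factor `d ! / d ^ d` is traded for `(1 / 2) ^ r₂`. -/
noncomputable def classNormBound : ℝ :=
  (2 / Real.pi) ^ nrComplexPlaces K * √|(discr K : ℝ)|

lemma nrComplexPlaces_le_finrank_sub_one :
    nrComplexPlaces K ≤ Module.finrank ℚ K - 1 := by
  have := card_add_two_mul_card_eq_rank K
  have : 0 < Module.finrank ℚ K := Module.finrank_pos
  lia

lemma minkowski_le_classNormBound :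
    (4 / Real.pi) ^ nrComplexPlaces K *
      ((Module.finrank ℚ K)! / Module.finrank ℚ K ^ Module.finrank ℚ K * √|(discr K : ℝ)|) ≤
        classNormBound K := by
  have hr := nrComplexPlaces_le_finrank_sub_one K
  obtain ⟨n, hn⟩ := Nat.exists_eq_add_one.mpr (Module.finrank_pos (R := ℚ) (M := K))
  rw [hn, Nat.add_sub_cancel] at hr
  have factorial_div_le : ((n + 1)! : ℝ) / (n + 1 : ℕ) ^ (n + 1) ≤ (1 / 2) ^ nrComplexPlaces K :=
    calc ((n + 1)! : ℝ) / (n + 1 : ℕ) ^ (n + 1) ≤ (1 / 2) ^ n := by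
          rw [div_le_iff₀ (by positivity), one_div, inv_pow, ← div_eq_inv_mul,
            le_div_iff₀ (by positivity)]
          exact_mod_cast factorial_succ_mul_two_pow_le n
      _ ≤ (1 / 2) ^ nrComplexPlaces K := pow_le_pow_of_le_one (by norm_num) (by norm_num) hr
  rw [hn]
  calc _ ≤ (4 / Real.pi) ^ nrComplexPlaces K *
          ((1 / 2) ^ nrComplexPlaces K * √|(discr K : ℝ)|) := by
        gcongr
    _ = classNormBound K := by
        rw [classNormBound, ← mul_assoc, ← mul_pow]
        ring_nf

variable {K} in
lemma exists_absNorm_le_classNormBound (C : ClassGroup (𝓞 K)) :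
    ∃ I : (Ideal (𝓞 K))⁰, ClassGroup.mk0 I = C ∧
      Ideal.absNorm (I : Ideal (𝓞 K)) ≤ classNormBound K := by
  obtain ⟨I, hI, hnorm⟩ := exists_ideal_in_class_of_norm_le C
  exact ⟨I, hI, hnorm.trans (minkowski_le_classNormBound K)⟩

lemma one_le_classNormBound : 1 ≤ classNormBound K := by
  obtain ⟨I, -, hI⟩ := exists_absNorm_le_classNormBound (1 : ClassGroup (𝓞 K))
  exact hI.trans' (Nat.one_le_cast.mpr (Ideal.absNorm_pos_of_nonZeroDivisors I))

lemma classNormBound_le_abs_discr : classNormBound K ≤ |(discr K : ℝ)| := by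
  have one_le_discr : (1 : ℝ) ≤ |(discr K : ℝ)| := by
    exact_mod_cast Int.one_le_abs (discr_ne_zero K)
  have two_div_pi_le_one : 2 / Real.pi ≤ 1 := (div_le_one Real.pi_pos).mpr Real.two_le_pi
  calc classNormBound K ≤ 1 * √|(discr K : ℝ)| := by
        rw [classNormBound]
        gcongr
        exact pow_le_one₀ (by positivity) two_div_pi_le_one
    _ ≤ |(discr K : ℝ)| := by
        rw [one_mul]
        exact (Real.sqrt_le_left (by positivity)).mpr (le_self_pow₀ one_le_discr two_ne_zero)

lemma classNumber_le_ncard_absNorm_le :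
    classNumber K ≤
      {I : Ideal (𝓞 K) | I ≠ ⊥ ∧ (Ideal.absNorm I : ℝ) ≤ classNormBound K}.ncard := by
  choose I hI hnorm using exists_absNorm_le_classNormBound (K := K)
  have hI_inj : Function.Injective fun C => (I C : Ideal (𝓞 K)) :=
    Subtype.val_injective.comp (Function.LeftInverse.injective hI)
  have hfin : {I : Ideal (𝓞 K) | I ≠ ⊥ ∧ (Ideal.absNorm I : ℝ) ≤ classNormBound K}.Finite :=
    (Ideal.finite_setOfPred_absNorm_le ⌊classNormBound K⌋₊).subset fun J hJ => Nat.le_floor hJ.2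
  rw [classNumber, ← Nat.card_eq_fintype_card, ← Set.ncard_univ]
  exact Set.ncard_le_ncard_of_injOn _
    (fun C _ => ⟨nonZeroDivisors.coe_ne_zero (I C), hnorm C⟩) hI_inj.injOn hfin

theorem classNumber_le_classNormBound_mul :
    (classNumber K : ℝ) ≤ classNormBound K *
      ((Module.finrank ℚ K - 1 : ℕ) + Real.log (classNormBound K)) ^ (Module.finrank ℚ K - 1) /
        (Module.finrank ℚ K - 1)! := by
  rw [← RingOfIntegers.rank K]
  exact (Nat.cast_le.mpr (classNumber_le_ncard_absNorm_le K)).trans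
    (ncard_absNorm_le_le (𝓞 K) (one_le_classNormBound K))

end NumberField

/-- For every number field `F` of degree `d ≥ 2`, the class number satisfies
`h_F ≤ (2/π)^{r₂} √D_F (d - 1 + log D_F)^{d-1} / (d-1)!`, where `D_F` is the absolute
discriminant and `r₂` the number of pairs of complex embeddings. -/
theorem stmt_9 (K : Type) [Field K] [NumberField K] (hd : 2 ≤ Module.finrank ℚ K) :
    (NumberField.classNumber K : ℝ)
      ≤ (2 / Real.pi) ^ (NumberField.InfinitePlace.nrComplexPlaces K) *
          Real.sqrt |(NumberField.discr K : ℝ)| *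
          ((Module.finrank ℚ K : ℝ) - 1 + Real.log |(NumberField.discr K : ℝ)|) ^
            (Module.finrank ℚ K - 1) /
          (Nat.factorial (Module.finrank ℚ K - 1)) := by
  have one_le_bound := one_le_classNormBound K
  have log_bound_nonneg : 0 ≤ Real.log (classNormBound K) := Real.log_nonneg one_le_bound
  rw [← Nat.cast_pred (by lia), ← classNormBound]
  refine (classNumber_le_classNormBound_mul K).trans ?_
  gcongr
  exact classNormBound_le_abs_discr K
end

section
/- For every number field F of degree d, every ε > 0 and every integer k ≥ -1, the k-th Laurent coefficient λ_k^F of the Dedekind zeta function ζ_F at s = 1 (so that ζ_F(s) = λ_{-1}^F (s-1)^{-1} + λ_0^F + λ_1^F (s-1) + ⋯) satisfies |λ_k^F| ≪_{d,ε,k} D_F^ε. -/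
open NumberField

/-!
Summing over the ideal classes and unfolding along the unit group, the ideals in a class are counted
by the lattice points of an ideal lattice `x J` in the unit ball of the mixed space, as `x` runs
over the fundamental cone of norm at most one. This count is `κ / N` up to
`O(D ^ c * N ^ (1 / d - 1))`, where `N` is the covolume of `x J` relative to `𝓞 K`, because the
covering radius of such a lattice is bounded in terms of the degree `d` and the discriminant `D`.
Taking the Mellin transform along the norm gives `(s - 1) * ζ(s) = s ^ r * F(s)`, with `r` the
number of infinite places and `F` holomorphic and `O(D ^ A * |s + 1|)` on `1 - 1 / (2 * d) ≤ re s`,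
without any appeal to the functional equation. On `re s = 1 + η` the comparison of ideals with
`d`-tuples of positive integers gives `|ζ(s)| ≤ ζ_ℚ(1 + η) ^ d`, uniformly in the field. By the
three lines theorem `F` is then `O(D ^ ε)` on the disc of radius `η` about `1` for small `η`, and
Cauchy's estimate bounds the Taylor coefficients of `(s - 1) * ζ(s)` at `1`.
-/

namespace DedekindLaurent

open MeasureTheory Set Filter Topology Module

section IdealCount

open UniqueFactorizationMonoid

variable {K : Type*} [Field K] [NumberField K] {ι : Type*}

/-- A labelling of the ideals of `𝓞 K` which separates the primes lying over the same prime
of `ℤ`. -/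
def SeparatesFibers (l : Ideal (𝓞 K) → ι) : Prop :=
  ∀ p : Ideal ℤ, p.IsPrime → InjOn l (p.primesOver (𝓞 K))

lemma exists_absNorm_eq_pow {P : Ideal (𝓞 K)} (hP : P.IsPrime) (hP0 : P ≠ ⊥) :
    ∃ f ≠ 0, Ideal.absNorm P = Ideal.absNorm (P.under ℤ) ^ f := by
  have : NeZero P := ⟨hP0⟩
  have : P.LiesOver (Ideal.span {((Ideal.absNorm (P.under ℤ) : ℕ) : ℤ)}) :=
    ⟨Int.ideal_span_absNorm_eq_self _⟩
  have hpow := Ideal.absNorm_eq_pow_inertiaDeg' P (Nat.absNorm_under_prime P)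
  refine ⟨_, fun h => hP.ne_top ?_, hpow⟩
  rwa [h, pow_zero, Ideal.absNorm_eq_one_iff] at hpow

lemma factorization_absNorm_under_eq_zero_iff (P : Ideal (𝓞 K)) {Q : Ideal (𝓞 K)}
    (hQ : Q.IsPrime) (hQ0 : Q ≠ ⊥) :
    (Ideal.absNorm Q).factorization (Ideal.absNorm (P.under ℤ)) = 0 ↔
      Ideal.absNorm (Q.under ℤ) ≠ Ideal.absNorm (P.under ℤ) := by
  have : NeZero Q := ⟨hQ0⟩
  have hq := Nat.absNorm_under_prime Q
  obtain ⟨f, hf0, hf⟩ := exists_absNorm_eq_pow hQ hQ0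
  rw [hf, hq.factorization_pow, Finsupp.single_apply_eq_zero]
  exact ⟨fun h hqp => hf0 (h hqp.symm), fun h hpq => absurd hpq.symm h⟩

lemma card_primesOver_le_finrank {R S : Type*} [CommRing R] [IsDomain R] [CommRing S] [Algebra R S]
    [Module.Finite R S] [Module.Flat R S] (p : Ideal R) [p.IsPrime] [Fintype (p.primesOver S)] :
    Fintype.card (p.primesOver S) ≤ finrank R S := by
  rw [← Ideal.sum_ramification_inertia_eq_finrank p S, Fintype.card_eq_sum_ones]
  refine Finset.sum_le_sum fun P _ => ?_
  have := P.2.1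
  exact Nat.mul_pos (Ideal.ramificationIdx_pos P.1 R) (Ideal.inertiaDeg_pos P.1 R)

variable (K) in
lemma exists_separatesFibers : ∃ l : Ideal (𝓞 K) → Fin (finrank ℚ K), SeparatesFibers l := by
  classical
  have hlabel : ∀ p : Ideal ℤ, ∃ l : Ideal (𝓞 K) → Fin (finrank ℚ K), p.IsPrime →
      InjOn l (p.primesOver (𝓞 K)) := fun p => by
    by_cases hp : p.IsPrime
    · have := (Algebra.QuasiFinite.finite_primesOver (S := 𝓞 K) p).fintype
      obtain ⟨e⟩ : Nonempty (p.primesOver (𝓞 K) ↪ Fin (finrank ℚ K)) := by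
        apply Function.Embedding.nonempty_of_card_le
        rw [Fintype.card_fin, ← RingOfIntegers.rank]
        exact card_primesOver_le_finrank p
      refine ⟨fun P => if h : P ∈ p.primesOver (𝓞 K) then e ⟨P, h⟩ else ⟨0, finrank_pos⟩,
        fun _ P hP Q hQ h => ?_⟩
      simpa [hP, hQ] using h
    · exact ⟨fun _ => ⟨0, finrank_pos⟩, fun h => absurd h hp⟩
  choose l hl using hlabel
  refine ⟨fun P => l (P.under ℤ) P, fun p hp P hP Q hQ hPQ => hl p hp hP hQ ?_⟩
  simpa only [← hP.2.over, ← hQ.2.over] using hPQ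

lemma isPrime_of_mem_normalizedFactors {I P : Ideal (𝓞 K)} (hP : P ∈ normalizedFactors I) :
    P.IsPrime ∧ P ≠ ⊥ :=
  have hprime := prime_of_normalized_factor P hP
  ⟨Ideal.isPrime_of_prime hprime, hprime.ne_zero⟩

lemma factorization_multiset_prod {α : Type*} (m : Multiset α) {f : α → ℕ}
    (hf : ∀ a ∈ m, f a ≠ 0) (p : ℕ) :
    (m.map f).prod.factorization p = (m.map fun a => (f a).factorization p).sum := by
  induction m using Multiset.induction_on with
  | empty => simp
  | cons a m ih =>
    have hm : ∀ b ∈ m, f b ≠ 0 := fun b hb => hf b (Multiset.mem_cons_of_mem hb)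
    have hprod : (m.map f).prod ≠ 0 := Multiset.prod_ne_zero (by simpa using hm)
    rw [Multiset.map_cons, Multiset.prod_cons, Multiset.map_cons, Multiset.sum_cons,
      Nat.factorization_mul (hf a (Multiset.mem_cons_self a m)) hprod, Finsupp.add_apply, ih hm]

variable [DecidableEq ι]

/-- The norm of the part of `I` supported on the primes with label `i`. -/
noncomputable def normComponent (l : Ideal (𝓞 K) → ι) (I : Ideal (𝓞 K)) (i : ι) : ℕ :=
  (((normalizedFactors I).filter (fun P => l P = i)).map Ideal.absNorm).prod

lemma prod_normComponent [Fintype ι] (l : Ideal (𝓞 K) → ι) {I : Ideal (𝓞 K)} (hI : I ≠ ⊥) :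
    ∏ i, normComponent l I i = Ideal.absNorm I := by
  have hfilter : ∀ m : Multiset (Ideal (𝓞 K)),
      ∏ i, ((m.filter (fun P => l P = i)).map Ideal.absNorm).prod =
        (m.map Ideal.absNorm).prod := fun m => by
    induction m using Multiset.induction_on with
    | empty => simp
    | cons Q m ih =>
      have hcons : ∀ i, (((Q ::ₘ m).filter (fun P => l P = i)).map Ideal.absNorm).prod =
          (if l Q = i then Ideal.absNorm Q else 1) *
            ((m.filter (fun P => l P = i)).map Ideal.absNorm).prod := fun i => by
        split_ifs with h <;> simp [h]
      simp_rw [hcons, Finset.prod_mul_distrib, ih]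
      simp
  calc ∏ i, normComponent l I i = ((normalizedFactors I).map Ideal.absNorm).prod := hfilter _
    _ = Ideal.absNorm I := by
      rw [← map_multiset_prod, Ideal.prod_normalizedFactors_eq_self hI]

lemma factorization_normComponent [DecidableEq (Ideal (𝓞 K))] {l : Ideal (𝓞 K) → ι}
    (hl : SeparatesFibers l) {P : Ideal (𝓞 K)} (hP : P.IsPrime) (I : Ideal (𝓞 K)) :
    (normComponent l I (l P)).factorization (Ideal.absNorm (P.under ℤ)) =
      (normalizedFactors I).count P *
        (Ideal.absNorm P).factorization (Ideal.absNorm (P.under ℤ)) := by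
  have hne : ∀ Q ∈ (normalizedFactors I).filter (fun Q => l Q = l P), Ideal.absNorm Q ≠ 0 :=
    fun Q hQ h => (isPrime_of_mem_normalizedFactors (Multiset.mem_filter.1 hQ).1).2
      (Ideal.absNorm_eq_zero_iff.1 h)
  have hother : ∀ Q ≠ P, Q ∈ (normalizedFactors I).filter (fun Q => l Q = l P) →
      (Ideal.absNorm Q).factorization (Ideal.absNorm (P.under ℤ)) = 0 := fun Q hQP hQ => by
    obtain ⟨hQI, hlQ⟩ := Multiset.mem_filter.1 hQ
    obtain ⟨hQ', hQ0⟩ := isPrime_of_mem_normalizedFactors hQI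
    rw [factorization_absNorm_under_eq_zero_iff P hQ' hQ0]
    refine fun h => hQP (hl (P.under ℤ) inferInstance ⟨hQ', ⟨?_⟩⟩ ⟨hP, ⟨rfl⟩⟩ hlQ)
    rw [← Int.ideal_span_absNorm_eq_self (P.under ℤ), ← h, Int.ideal_span_absNorm_eq_self]
  rw [normComponent, factorization_multiset_prod _ hne, Multiset.sum_map_eq_nsmul_single P hother,
    Multiset.count_filter_of_pos (p := fun Q => l Q = l P) rfl, smul_eq_mul]

lemma injOn_normComponent {l : Ideal (𝓞 K) → ι} (hl : SeparatesFibers l) :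
    InjOn (normComponent l) {I : Ideal (𝓞 K) | I ≠ ⊥} := by
  classical
  intro I hI J hJ hIJ
  rw [← Ideal.prod_normalizedFactors_eq_self hI, ← Ideal.prod_normalizedFactors_eq_self hJ]
  congr 1
  ext P
  by_cases hP : P.IsPrime ∧ P ≠ ⊥
  · have hpos := (factorization_absNorm_under_eq_zero_iff P hP.1 hP.2).not.2 (by simp)
    refine Nat.eq_of_mul_eq_mul_right (Nat.pos_of_ne_zero hpos) ?_
    rw [← factorization_normComponent hl hP.1, ← factorization_normComponent hl hP.1,
      hIJ]
  · rw [Multiset.count_eq_zero_of_notMem, Multiset.count_eq_zero_of_notMem]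
    exacts [fun h => hP (isPrime_of_mem_normalizedFactors h),
      fun h => hP (isPrime_of_mem_normalizedFactors h)]

variable (K) in
lemma sum_absNorm_rpow_le {σ : ℝ} (hσ : 1 < σ) (S : Finset {I : Ideal (𝓞 K) // I ≠ ⊥}) :
    ∑ I ∈ S, (Ideal.absNorm I.1 : ℝ) ^ (-σ) ≤ (∑' n : ℕ, (n : ℝ) ^ (-σ)) ^ finrank ℚ K := by
  classical
  obtain ⟨l, hl⟩ := exists_separatesFibers K
  let comp : {I : Ideal (𝓞 K) // I ≠ ⊥} → Fin (finrank ℚ K) → ℕ := fun I => normComponent l I.1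
  have hcomp : comp.Injective := fun I J h => Subtype.ext (injOn_normComponent hl I.2 J.2 h)
  obtain ⟨M, hM⟩ : ∃ M, ∀ x ∈ S.image comp, ∀ i, x i < M := by
    obtain ⟨b, hb⟩ := (S.image comp).bddAbove
    exact ⟨_, fun x hx i => Nat.lt_succ_of_le
      ((hb hx i).trans (Finset.le_sup (f := b) (Finset.mem_univ i)))⟩
  calc ∑ I ∈ S, (Ideal.absNorm I.1 : ℝ) ^ (-σ)
      = ∑ I ∈ S, ∏ i, (comp I i : ℝ) ^ (-σ) := by
        refine Finset.sum_congr rfl fun I _ => ?_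
        rw [← prod_normComponent l I.2, Nat.cast_prod,
          Real.finsetProd_rpow _ _ fun i _ => Nat.cast_nonneg _]
    _ = ∑ x ∈ S.image comp, ∏ i, (x i : ℝ) ^ (-σ) := by rw [Finset.sum_image hcomp.injOn]
    _ ≤ ∑ x ∈ Fintype.piFinset fun _ => Finset.range M, ∏ i, (x i : ℝ) ^ (-σ) := by
        refine Finset.sum_le_sum_of_subset_of_nonneg (fun x hx => ?_) fun _ _ _ => by positivity
        simpa [Fintype.mem_piFinset] using hM x hx
    _ = (∑ n ∈ Finset.range M, (n : ℝ) ^ (-σ)) ^ finrank ℚ K := by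
        rw [← Finset.prod_univ_sum (fun _ => Finset.range M) fun _ n => (n : ℝ) ^ (-σ)]
        simp
    _ ≤ _ := by
        gcongr
        exact (Real.summable_nat_rpow.2 (neg_lt_neg hσ)).sum_le_tsum _ fun _ _ => by positivity

variable (K) in
lemma summable_absNorm_rpow {σ : ℝ} (hσ : 1 < σ) :
    Summable fun I : {I : Ideal (𝓞 K) // I ≠ ⊥} => (Ideal.absNorm I.1 : ℝ) ^ (-σ) :=
  summable_of_sum_le (fun _ => by positivity) (sum_absNorm_rpow_le K hσ)

variable (K) in
lemma tsum_absNorm_rpow_le {σ : ℝ} (hσ : 1 < σ) :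
    ∑' I : {I : Ideal (𝓞 K) // I ≠ ⊥}, (Ideal.absNorm I.1 : ℝ) ^ (-σ) ≤
      (∑' n : ℕ, (n : ℝ) ^ (-σ)) ^ finrank ℚ K :=
  (summable_absNorm_rpow K hσ).tsum_le_of_sum_le (sum_absNorm_rpow_le K hσ)

end IdealCount

section ComplexAnalysis

open Complex Complex.HadamardThreeLines

variable {E : Type*} [NormedAddCommGroup E] [NormedSpace ℂ E]

lemma norm_le_rpow_mul_of_mem_strip {f : ℂ → E} {a b L M : ℝ} (hab : a < b) (hL : 1 ≤ L)
    (hM : 1 ≤ M) (hf : ∀ s : ℂ, a ≤ s.re → DifferentiableAt ℂ f s)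
    (hfL : ∀ s : ℂ, a ≤ s.re → ‖f s‖ ≤ L) (hfM : ∀ s : ℂ, s.re = b → ‖f s‖ ≤ M)
    {s : ℂ} (has : a ≤ s.re) (hsb : s.re ≤ b) :
    ‖f s‖ ≤ L ^ ((b - s.re) / (b - a)) * M := by
  have hba : 0 < b - a := sub_pos.2 hab
  have hcl : closure (verticalStrip a b) ⊆ verticalClosedStrip a b :=
    closure_minimal (preimage_mono Ioo_subset_Icc_self) (isClosed_Icc.preimage continuous_re)
  have hdiff : DiffContOnCl ℂ f (verticalStrip a b) := DifferentiableOn.diffContOnCl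
    fun z hz => (hf z (hcl hz).1).differentiableWithinAt
  have hbdd : BddAbove ((norm ∘ f) '' verticalClosedStrip a b) :=
    ⟨L, forall_mem_image.2 fun z hz => hfL z hz.1⟩
  calc ‖f s‖ ≤ L ^ (1 - (s.re - a) / (b - a)) * M ^ ((s.re - a) / (b - a)) :=
        norm_le_interp_of_mem_verticalClosedStrip' hab ⟨has, hsb⟩ hdiff hbdd
          (fun z hz => hfL z (ge_of_eq hz)) hfM
    _ ≤ L ^ ((b - s.re) / (b - a)) * M ^ (1 : ℝ) := by
        have hle : (s.re - a) / (b - a) ≤ 1 := (div_le_one hba).2 (by linarith)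
        rw [one_sub_div hba.ne', sub_sub_sub_cancel_right]
        gcongr
    _ = L ^ ((b - s.re) / (b - a)) * M := by rw [Real.rpow_one]

lemma eventuallyEq_nhds_of_eqOn_halfPlane {f g : ℂ → E} {a : ℂ} (hf : AnalyticAt ℂ f a)
    (hg : AnalyticAt ℂ g a) (hfg : EqOn f g {s | a.re < s.re}) : f =ᶠ[𝓝 a] g := by
  have hright : Tendsto (fun t : ℝ => a + t) (𝓝[>] 0) (𝓝[≠] a) := by
    refine tendsto_nhdsWithin_iff.2 ⟨?_, ?_⟩
    · refine tendsto_nhdsWithin_of_tendsto_nhds (Continuous.tendsto' (by fun_prop) _ _ ?_)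
      rw [ofReal_zero, add_zero]
    · filter_upwards [self_mem_nhdsWithin] with t (ht : 0 < t)
      exact fun h => ht.ne' (ofReal_eq_zero.1 (add_eq_left.1 h))
  refine (hf.frequently_eq_iff_eventually_eq hg).1 (hright.frequently (Eventually.frequently ?_))
  filter_upwards [self_mem_nhdsWithin] with t (ht : 0 < t)
  exact hfg (by simpa using ht)

lemma one_le_norm_add_one {s : ℂ} (hs : 0 ≤ s.re) : 1 ≤ ‖s + 1‖ :=
  calc (1 : ℝ) ≤ (s + 1).re := by simpa using hs
    _ ≤ ‖s + 1‖ := re_le_norm _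

lemma norm_sub_one_le_norm_add_one {s : ℂ} (hs : 0 ≤ s.re) : ‖s - 1‖ ≤ ‖s + 1‖ := by
  rw [← sq_le_sq₀ (norm_nonneg _) (norm_nonneg _), Complex.sq_norm, Complex.sq_norm,
    normSq_apply, normSq_apply]
  simp only [sub_re, sub_im, add_re, add_im, one_re, one_im]
  nlinarith

/- Dividing by `s + 1` makes `F` bounded, so that the three lines theorem applies to the strip
between the lines `re s = 1 - δ` and `re s = 1 + η`. -/
lemma norm_le_of_norm_le_mul_norm_add_one {F : ℂ → E} {δ η L M : ℝ} (hη : 0 < η) (hηδ : η ≤ δ)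
    (hδ : δ ≤ 1) (hL : 1 ≤ L) (hM : 1 ≤ M)
    (hF : ∀ s : ℂ, 1 - δ ≤ s.re → DifferentiableAt ℂ F s)
    (hFL : ∀ s : ℂ, 1 - δ ≤ s.re → ‖F s‖ ≤ L * ‖s + 1‖)
    (hFM : ∀ s : ℂ, s.re = 1 + η → ‖F s‖ ≤ M * ‖s + 1‖) {s : ℂ} (hs : |s.re - 1| ≤ η) :
    ‖F s‖ ≤ L ^ (2 * η / δ) * M * ‖s + 1‖ := by
  obtain ⟨hs₁, hs₂⟩ := abs_le.1 hs
  have hpos : ∀ z : ℂ, 1 - δ ≤ z.re → 0 < ‖z + 1‖ := fun z hz =>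
    zero_lt_one.trans_le (one_le_norm_add_one (by linarith))
  have hnorm : ∀ z : ℂ, ‖(z + 1)⁻¹ • F z‖ = ‖F z‖ / ‖z + 1‖ := fun z => by
    rw [norm_smul, norm_inv, inv_mul_eq_div]
  have hstrip := norm_le_rpow_mul_of_mem_strip (f := fun z => (z + 1)⁻¹ • F z) (a := 1 - δ)
    (b := 1 + η) (by linarith) hL hM
    (fun z hz => ((differentiableAt_id.add_const (1 : ℂ)).inv
      (norm_pos_iff.1 (hpos z hz))).smul (hF z hz))
    (fun z hz => by rw [hnorm, div_le_iff₀ (hpos z hz)]; exact hFL z hz)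
    (fun z hz => by rw [hnorm, div_le_iff₀ (hpos z (by linarith))]; exact hFM z hz)
    (by linarith) (by linarith : s.re ≤ 1 + η)
  have hexp : (1 + η - s.re) / (1 + η - (1 - δ)) ≤ 2 * η / δ := by
    gcongr <;> linarith
  rw [hnorm, div_le_iff₀ (hpos s (by linarith))] at hstrip
  exact hstrip.trans (by gcongr)

lemma norm_iteratedDeriv_pow_mul_one_le {F : ℂ → ℂ} {δ η L M : ℝ} (r j : ℕ) (hη : 0 < η)
    (hηδ : η < δ) (hδ : δ ≤ 1) (hL : 1 ≤ L) (hM : 1 ≤ M)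
    (hF : ∀ s : ℂ, 1 - δ ≤ s.re → DifferentiableAt ℂ F s)
    (hFL : ∀ s : ℂ, 1 - δ ≤ s.re → ‖F s‖ ≤ L * ‖s + 1‖)
    (hFM : ∀ s : ℂ, s.re = 1 + η → ‖s ^ r * F s‖ ≤ M * ‖s - 1‖) :
    ‖iteratedDeriv j (fun s => s ^ r * F s) 1‖ / j.factorial ≤
      3 * 2 ^ r * (L ^ (2 * η / δ) * M) / η ^ j := by
  have hFM' : ∀ s : ℂ, s.re = 1 + η → ‖F s‖ ≤ M * ‖s + 1‖ := fun s hs => by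
    have hs1 : 1 ≤ ‖s‖ := by linarith [re_le_norm s]
    calc ‖F s‖ ≤ ‖s‖ ^ r * ‖F s‖ := le_mul_of_one_le_left (norm_nonneg _) (one_le_pow₀ hs1)
      _ = ‖s ^ r * F s‖ := by rw [norm_mul, norm_pow]
      _ ≤ M * ‖s - 1‖ := hFM s hs
      _ ≤ M * ‖s + 1‖ := by gcongr M * ?_; exact norm_sub_one_le_norm_add_one (by linarith)
  have hre : ∀ z ∈ Metric.closedBall (1 : ℂ) η, |z.re - 1| ≤ η := fun z hz =>
    (abs_re_le_norm (z - 1)).trans (mem_closedBall_iff_norm.1 hz)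
  have hsphere : ∀ z ∈ Metric.sphere (1 : ℂ) η,
      ‖z ^ r * F z‖ ≤ 3 * 2 ^ r * (L ^ (2 * η / δ) * M) := by
    intro z hz
    have hz2 : ‖z‖ ≤ 2 := by
      linarith [norm_le_norm_add_norm_sub' z 1, mem_sphere_iff_norm.1 hz, norm_one (α := ℂ)]
    have hz3 : ‖z + 1‖ ≤ 3 := by linarith [norm_add_le z 1, norm_one (α := ℂ)]
    have hFz := norm_le_of_norm_le_mul_norm_add_one hη hηδ.le hδ hL hM hF hFL hFM'
      (hre z (Metric.sphere_subset_closedBall hz))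
    calc ‖z ^ r * F z‖ = ‖z‖ ^ r * ‖F z‖ := by rw [norm_mul, norm_pow]
      _ ≤ 2 ^ r * (L ^ (2 * η / δ) * M * 3) := by
          gcongr
          exact hFz.trans (by gcongr)
      _ = 3 * 2 ^ r * (L ^ (2 * η / δ) * M) := by ring
  have hball : DiffContOnCl ℂ (fun s => s ^ r * F s) (Metric.ball 1 η) :=
    DifferentiableOn.diffContOnCl fun z hz => by
      have hzre := abs_le.1 (hre z (Metric.closure_ball_subset_closedBall hz))
      exact ((differentiableAt_id.pow r).mul (hF z (by linarith))).differentiableWithinAt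
  rw [div_le_iff₀ (by positivity)]
  exact (norm_iteratedDeriv_le_of_forall_mem_sphere_norm_le j hη hball hsphere).trans_eq
    (by ring)

end ComplexAnalysis

attribute [local instance] Classical.propDecidable

section MixedSpace

open mixedEmbedding InfinitePlace
open scoped ENNReal NNReal

variable {K : Type*} [Field K]

lemma mem_convexBodyLT_iff {f : InfinitePlace K → ℝ≥0} {x : mixedSpace K} :
    x ∈ convexBodyLT K f ↔ ∀ w, normAtPlace w x < f w := by
  simp only [convexBodyLT, mem_prod, Set.mem_pi, mem_univ, mem_ball_zero_iff, forall_true_left]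
  constructor
  · rintro ⟨hreal, hcomplex⟩ w
    rcases isReal_or_isComplex w with hw | hw
    · rw [normAtPlace_apply_of_isReal hw]
      exact hreal ⟨w, hw⟩
    · rw [normAtPlace_apply_of_isComplex hw]
      exact hcomplex ⟨w, hw⟩
  · refine fun h => ⟨fun w => ?_, fun w => ?_⟩
    · rw [← normAtPlace_apply_of_isReal w.2]
      exact h w
    · rw [← normAtPlace_apply_of_isComplex w.2]
      exact h w

variable [NumberField K]

lemma norm_le_iff_normAtPlace_le {x : mixedSpace K} {r : ℝ} :
    ‖x‖ ≤ r ↔ ∀ w, normAtPlace w x ≤ r := by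
  simp [norm_eq_sup'_normAtPlace]

lemma norm_lt_iff_normAtPlace_lt {x : mixedSpace K} {r : ℝ} :
    ‖x‖ < r ↔ ∀ w, normAtPlace w x < r := by
  simp [norm_eq_sup'_normAtPlace]

lemma normAtPlace_pos {x : mixedSpace K} (hx : mixedEmbedding.norm x ≠ 0) (w : InfinitePlace K) :
    0 < normAtPlace w x := by
  rw [mixedEmbedding.norm_apply, Finset.prod_ne_zero_iff] at hx
  exact (normAtPlace_nonneg w x).lt_of_ne' (ne_zero_pow mult_ne_zero (hx w (Finset.mem_univ w)))

lemma norm_pos_of_ne_zero {x : mixedSpace K} (hx : mixedEmbedding.norm x ≠ 0) :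
    0 < mixedEmbedding.norm x :=
  (mixedEmbedding.norm_nonneg x).lt_of_ne' hx

lemma preimage_mul_left_ball {x : mixedSpace K} (hx : mixedEmbedding.norm x ≠ 0) (r : ℝ) :
    (x * ·) ⁻¹' Metric.ball 0 r =
      convexBodyLT K fun w => (r / normAtPlace w x).toNNReal := by
  ext y
  simp only [mem_preimage, mem_ball_zero_iff, norm_lt_iff_normAtPlace_lt, mem_convexBodyLT_iff,
    Real.coe_toNNReal', map_mul]
  refine forall_congr' fun w => ?_
  rw [lt_max_iff, or_iff_left (normAtPlace_nonneg w y).not_gt, lt_div_iff₀ (normAtPlace_pos hx w),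
    mul_comm]

lemma volume_preimage_mul_left_ball {x : mixedSpace K} (hx : mixedEmbedding.norm x ≠ 0) {r : ℝ}
    (hr : 0 ≤ r) :
    volume ((x * ·) ⁻¹' Metric.ball 0 r) =
      convexBodyLTFactor K * ENNReal.ofReal (r ^ finrank ℚ K / mixedEmbedding.norm x) := by
  have hprod : r ^ finrank ℚ K / mixedEmbedding.norm x =
      ∏ w, (r / normAtPlace w x) ^ mult w := by
    simp_rw [div_pow, Finset.prod_div_distrib, Finset.prod_pow_eq_pow_sum, sum_mult_eq,
      mixedEmbedding.norm_apply]
  have hnonneg : ∀ w, 0 ≤ r / normAtPlace w x := fun w => div_nonneg hr (normAtPlace_nonneg w x)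
  rw [preimage_mul_left_ball hx, convexBodyLT_volume, hprod,
    ENNReal.ofReal_prod_of_nonneg fun w _ => pow_nonneg (hnonneg w) _]
  congr 1
  push_cast
  refine Finset.prod_congr rfl fun w _ => ?_
  rw [ENNReal.ofReal_pow (hnonneg w)]
  rfl

variable (K) in
lemma volume_closedBall_one :
    volume (Metric.closedBall (0 : mixedSpace K) 1) = convexBodyLTFactor K := by
  rw [Measure.addHaar_closedBall_eq_addHaar_ball]
  simpa using volume_preimage_mul_left_ball (x := (1 : mixedSpace K)) (by simp) zero_le_one

variable (K) in
lemma one_le_coe_convexBodyLTFactor : (1 : ℝ) ≤ convexBodyLTFactor K :=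
  mod_cast one_le_convexBodyLTFactor K

variable (K) in
lemma convexBodyLTFactor_le : (convexBodyLTFactor K : ℝ) ≤ 4 ^ finrank ℚ K := by
  rw [← card_add_two_mul_card_eq_rank, pow_add, pow_mul]
  simp only [convexBodyLTFactor, NNReal.coe_mul, NNReal.coe_pow, NNReal.coe_ofNat,
    NNReal.coe_real_pi]
  gcongr
  · norm_num
  · linarith [Real.pi_le_four]

lemma det_mulLeft_ne_zero {x : mixedSpace K} (hx : mixedEmbedding.norm x ≠ 0) :
    LinearMap.det (LinearMap.mulLeft ℝ x) ≠ 0 := by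
  intro hdet
  obtain ⟨y, hy, hy0⟩ := Submodule.exists_mem_ne_zero_of_ne_bot
    (LinearMap.bot_lt_ker_of_det_eq_zero hdet).ne'
  refine hy0 (forall_normAtPlace_eq_zero_iff.1 fun w => ?_)
  have hxy : normAtPlace w (x * y) = 0 := by
    rw [← LinearMap.mulLeft_apply (R := ℝ), LinearMap.mem_ker.1 hy, map_zero]
  rw [map_mul] at hxy
  exact (mul_eq_zero.1 hxy).resolve_left (normAtPlace_pos hx w).ne'

lemma map_mul_left_volume {x : mixedSpace K} (hx : mixedEmbedding.norm x ≠ 0) :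
    (volume : Measure (mixedSpace K)).map (x * ·) =
      (ENNReal.ofReal (mixedEmbedding.norm x))⁻¹ • volume := by
  have hmap := Measure.map_linearMap_addHaar_eq_smul_addHaar (volume : Measure (mixedSpace K))
    (det_mulLeft_ne_zero hx)
  change volume.map (x * ·) = _ at hmap
  have hone := volume_preimage_mul_left_ball (x := (1 : mixedSpace K)) (by simp) zero_le_one
  simp only [one_mul, preimage_id', map_one, one_pow, div_one, ENNReal.ofReal_one, mul_one] at hone
  have hball := congrArg (fun μ : Measure (mixedSpace K) => μ (Metric.ball 0 1)) hmap
  simp only [Measure.smul_apply, smul_eq_mul] at hball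
  rw [Measure.map_apply (measurable_const_mul x) measurableSet_ball,
    volume_preimage_mul_left_ball hx zero_le_one, hone, mul_comm, one_pow, one_div,
    ENNReal.ofReal_inv_of_pos (norm_pos_of_ne_zero hx)] at hball
  rw [hmap, ← (ENNReal.mul_left_inj (mod_cast convexBodyLTFactor_ne_zero K)
    ENNReal.coe_ne_top).1 hball]

lemma lintegral_comp_mul_left {x : mixedSpace K} (hx : mixedEmbedding.norm x ≠ 0)
    {φ : mixedSpace K → ℝ≥0∞} (hφ : Measurable φ) :
    ∫⁻ y, φ (x * y) = (ENNReal.ofReal (mixedEmbedding.norm x))⁻¹ * ∫⁻ y, φ y := by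
  rw [← lintegral_map hφ (measurable_const_mul x), map_mul_left_volume hx,
    lintegral_smul_measure, smul_eq_mul]

lemma volume_preimage_mul_left {x : mixedSpace K} (hx : mixedEmbedding.norm x ≠ 0)
    {S : Set (mixedSpace K)} (hS : MeasurableSet S) :
    volume ((x * ·) ⁻¹' S) = (ENNReal.ofReal (mixedEmbedding.norm x))⁻¹ * volume S := by
  rw [← Measure.map_apply (measurable_const_mul x) hS, map_mul_left_volume hx,
    Measure.smul_apply, smul_eq_mul]

end MixedSpace

section GeometryOfNumbers

open mixedEmbedding InfinitePlace Ideal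
open scoped ENNReal NNReal nonZeroDivisors IntermediateField

/-- The absolute discriminant, written `D_K` in analytic number theory, as a real number. -/
noncomputable def absDiscr (K : Type*) [Field K] [NumberField K] : ℝ := |(discr K : ℝ)|

/-- The covolume of `𝓞 K` in the mixed space, where complex places carry the Lebesgue measure
of `ℂ`. -/
noncomputable def integerCovolume (K : Type*) [Field K] [NumberField K] : ℝ :=
  2⁻¹ ^ nrComplexPlaces K * √(absDiscr K)

/-- The covolume of the lattice `x J` relative to that of `𝓞 K`. -/
noncomputable def twistedNorm {K : Type*} [Field K] [NumberField K] (J : (Ideal (𝓞 K))⁰)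
    (x : mixedSpace K) : ℝ :=
  mixedEmbedding.norm x * absNorm (J : Ideal (𝓞 K))

/-- A bound, in terms of the degree `n` and the absolute discriminant `D`, for the covering radius
of an ideal lattice of norm one. -/
noncomputable def coveringConstant (n : ℕ) (D : ℝ) : ℝ :=
  4 * D * (n * ((2 ^ n + 2) * D) ^ n)

section

variable (K : Type*) [Field K] [NumberField K]

lemma one_le_absDiscr : 1 ≤ absDiscr K := by
  unfold absDiscr
  exact_mod_cast Int.one_le_abs (discr_ne_zero K)

lemma integerCovolume_pos : 0 < integerCovolume K := by
  have hD := one_le_absDiscr K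
  unfold integerCovolume
  positivity

lemma integerCovolume_le_absDiscr : integerCovolume K ≤ absDiscr K := by
  have hD := one_le_absDiscr K
  calc integerCovolume K ≤ 1 * √(absDiscr K) := by
        unfold integerCovolume
        gcongr
        exact pow_le_one₀ (by norm_num) (by norm_num)
    _ ≤ absDiscr K := by
        rw [one_mul, Real.sqrt_le_left (by linarith)]
        nlinarith

lemma inv_integerCovolume_le : (integerCovolume K)⁻¹ ≤ 2 ^ finrank ℚ K := by
  rw [integerCovolume, mul_inv, inv_pow, inv_inv, ← card_add_two_mul_card_eq_rank]
  calc (2 : ℝ) ^ nrComplexPlaces K * (√(absDiscr K))⁻¹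
      ≤ 2 ^ nrComplexPlaces K * 1 := by
        gcongr
        exact inv_le_one_of_one_le₀ (Real.one_le_sqrt.2 (one_le_absDiscr K))
    _ ≤ 2 ^ (nrRealPlaces K + 2 * nrComplexPlaces K) := by
        rw [mul_one]
        gcongr
        · norm_num
        · omega

lemma volume_fundamentalDomain_latticeBasis_eq :
    volume (ZSpan.fundamentalDomain (latticeBasis K)) = ENNReal.ofReal (integerCovolume K) := by
  rw [volume_fundamentalDomain_latticeBasis, integerCovolume, ENNReal.ofReal_mul (by positivity),
    ENNReal.ofReal_pow (by norm_num), ENNReal.ofReal_inv_of_pos (by norm_num),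
    ENNReal.ofReal_ofNat, ← ENNReal.ofReal_coe_nnreal]
  simp [absDiscr, Int.norm_eq_abs]

end

variable {K : Type*} [Field K] [NumberField K]

lemma one_le_absNorm (J : (Ideal (𝓞 K))⁰) : (1 : ℝ) ≤ absNorm (J : Ideal (𝓞 K)) :=
  mod_cast Nat.one_le_iff_ne_zero.2 (absNorm_ne_zero_of_nonZeroDivisors J)

lemma twistedNorm_pos (J : (Ideal (𝓞 K))⁰) {x : mixedSpace K} (hx : mixedEmbedding.norm x ≠ 0) :
    0 < twistedNorm J x :=
  mul_pos (norm_pos_of_ne_zero hx) (zero_lt_one.trans_le (one_le_absNorm J))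

lemma volume_fundamentalDomain_ideal (J : (Ideal (𝓞 K))⁰) :
    volume (ZSpan.fundamentalDomain (fractionalIdealLatticeBasis K (FractionalIdeal.mk0 K J))) =
      ENNReal.ofReal (absNorm (J : Ideal (𝓞 K)) * integerCovolume K) := by
  rw [volume_fundamentalDomain_fractionalIdealLatticeBasis,
    volume_fundamentalDomain_latticeBasis_eq, ENNReal.ofReal_mul (by positivity)]
  simp [FractionalIdeal.coeIdeal_absNorm]

lemma minkowskiBound_eq (J : (Ideal (𝓞 K))⁰) :
    minkowskiBound K (FractionalIdeal.mk0 K J) =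
      ENNReal.ofReal (absNorm (J : Ideal (𝓞 K)) * integerCovolume K * 2 ^ finrank ℚ K) := by
  have hcov := (integerCovolume_pos K).le
  rw [minkowskiBound, volume_fundamentalDomain_ideal, mixedEmbedding.finrank,
    ENNReal.ofReal_mul (p := _ * integerCovolume K) (by positivity),
    ENNReal.ofReal_pow zero_le_two, ENNReal.ofReal_ofNat]

lemma minkowskiBound_one_le :
    minkowskiBound K ↑1 ≤ ENNReal.ofReal (2 ^ finrank ℚ K * absDiscr K) := by
  have hbound := minkowskiBound_eq (1 : (Ideal (𝓞 K))⁰)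
  rw [map_one] at hbound
  rw [hbound]
  apply ENNReal.ofReal_le_ofReal
  simp only [OneMemClass.coe_one, one_eq_top, absNorm_top, Nat.cast_one, one_mul]
  rw [mul_comm]
  gcongr
  exact integerCovolume_le_absDiscr K

variable (K) in
lemma exists_primitive_element_norm_le :
    ∃ θ : 𝓞 K, ℚ⟮(θ : K)⟯ = ⊤ ∧ ‖mixedEmbedding K θ‖ ≤ (2 ^ finrank ℚ K + 2) * absDiscr K := by
  have hD := one_le_absDiscr K
  set B : ℝ≥0 := (2 ^ finrank ℚ K * absDiscr K + 1).toNNReal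
  have hB' : (B : ℝ) = 2 ^ finrank ℚ K * absDiscr K + 1 := Real.coe_toNNReal _ (by positivity)
  have hpos : 0 ≤ 2 ^ finrank ℚ K * absDiscr K := by positivity
  have hmink : minkowskiBound K ↑1 < B :=
    minkowskiBound_one_le.trans_lt (ENNReal.ofReal_lt_ofReal_iff_of_nonneg hpos |>.2
      (lt_add_one _))
  obtain ⟨w₀⟩ : Nonempty (InfinitePlace K) := inferInstance
  rcases isReal_or_isComplex w₀ with hw₀ | hw₀
  · obtain ⟨θ, hθ, hlt⟩ := exists_primitive_element_lt_of_isReal K hw₀ (B := B)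
      (hmink.trans_le (le_mul_of_one_le_left zero_le (mod_cast one_le_convexBodyLTFactor K)))
    refine ⟨θ, hθ, norm_le_iff_normAtPlace_le.2 fun w => ?_⟩
    rw [normAtPlace_apply]
    refine (hlt w).le.trans (max_le ?_ ?_)
    · exact hB'.le.trans (by nlinarith)
    · exact NNReal.coe_one.le.trans (by nlinarith)
  · obtain ⟨θ, hθ, hlt⟩ := exists_primitive_element_lt_of_isComplex K hw₀ (B := B)
      (hmink.trans_le (le_mul_of_one_le_left zero_le (mod_cast one_le_convexBodyLT'Factor K)))
    refine ⟨θ, hθ, norm_le_iff_normAtPlace_le.2 fun w => ?_⟩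
    rw [normAtPlace_apply]
    refine (hlt w).le.trans ?_
    rw [Real.sqrt_le_left (by positivity), hB']
    nlinarith

lemma span_range_pow_eq_top {θ : 𝓞 K} (hθ : ℚ⟮(θ : K)⟯ = ⊤) :
    Submodule.span ℝ (range fun i : Fin (finrank ℚ K) => mixedEmbedding K θ ^ (i : ℕ)) = ⊤ := by
  have hint : IsIntegral ℚ (θ : K) := Algebra.IsIntegral.isIntegral _
  have hadj : Algebra.adjoin ℚ {(θ : K)} = ⊤ := by
    rw [← IntermediateField.adjoin_simple_toSubalgebra_of_isAlgebraic hint.isAlgebraic, hθ,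
      IntermediateField.top_toSubalgebra]
  let pb := PowerBasis.ofAdjoinEqTop hint hadj
  have hgen : pb.gen = (θ : K) := PowerBasis.ofAdjoinEqTop_gen hint hadj
  have hK (k : K) : mixedEmbedding K k ∈
      Submodule.span ℝ (range fun i : Fin (finrank ℚ K) => mixedEmbedding K θ ^ (i : ℕ)) := by
    rw [← pb.basis.sum_repr k, map_sum]
    refine Submodule.sum_mem _ fun i _ => ?_
    rw [pb.basis_eq_pow, hgen, map_rat_smul, map_pow, ← Rat.cast_smul_eq_qsmul ℝ]
    exact Submodule.smul_mem _ _ (Submodule.subset_span ⟨⟨i, i.2.trans_eq pb.finrank.symm⟩, rfl⟩)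
  rw [eq_top_iff, ← (latticeBasis K).span_eq, Submodule.span_le]
  rintro _ ⟨i, rfl⟩
  rw [latticeBasis_apply]
  exact hK _

lemma exists_ne_zero_norm_mul_le (J : (Ideal (𝓞 K))⁰) {x : mixedSpace K}
    (hx : mixedEmbedding.norm x ≠ 0) :
    ∃ a ∈ (J : Ideal (𝓞 K)), a ≠ 0 ∧
      ‖x * mixedEmbedding K a‖ ≤
        4 * absDiscr K * twistedNorm J x ^ (finrank ℚ K : ℝ)⁻¹ := by
  have hD := one_le_absDiscr K
  have hd : finrank ℚ K ≠ 0 := finrank_pos.ne'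
  have := norm_pos_of_ne_zero hx
  have hJ := one_le_absNorm J
  have hn := twistedNorm_pos J hx
  set R := 4 * absDiscr K * twistedNorm J x ^ (finrank ℚ K : ℝ)⁻¹ with hR
  have hR0 : 0 ≤ R := by positivity
  have hRpow : R ^ finrank ℚ K / mixedEmbedding.norm x =
      absNorm (J : Ideal (𝓞 K)) * (4 * absDiscr K) ^ finrank ℚ K := by
    rw [hR, mul_pow, Real.rpow_inv_natCast_pow hn.le hd, twistedNorm]
    field_simp
  have hcov : integerCovolume K * 2 ^ finrank ℚ K < (4 * absDiscr K) ^ finrank ℚ K := by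
    rw [mul_pow, mul_comm]
    exact mul_lt_mul (pow_lt_pow_left₀ (by norm_num) (by norm_num) hd)
      ((integerCovolume_le_absDiscr K).trans (le_self_pow₀ hD hd)) (integerCovolume_pos K)
      (by positivity)
  have hmink : minkowskiBound K (FractionalIdeal.mk0 K J) <
      volume (convexBodyLT K fun w => (R / normAtPlace w x).toNNReal) := by
    rw [← preimage_mul_left_ball hx, volume_preimage_mul_left_ball hx hR0, minkowskiBound_eq,
      hRpow, mul_assoc]
    refine lt_of_lt_of_le ?_ (le_mul_of_one_le_left zero_le
      (mod_cast one_le_convexBodyLTFactor K))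
    rw [ENNReal.ofReal_lt_ofReal_iff (by positivity)]
    gcongr
  obtain ⟨b, hbJ, hb0, hb⟩ := exists_ne_zero_mem_ideal_lt K (FractionalIdeal.mk0 K J) hmink
  rw [FractionalIdeal.coe_mk0] at hbJ
  obtain ⟨a, haJ, rfl⟩ := (FractionalIdeal.mem_coeIdeal _).1 hbJ
  refine ⟨a, haJ, fun ha => hb0 (by simp [ha]), ?_⟩
  have hmem : mixedEmbedding K a ∈ (x * ·) ⁻¹' Metric.ball 0 R := by
    rw [preimage_mul_left_ball hx, mem_convexBodyLT_iff]
    exact fun w => by simpa only [normAtPlace_apply] using hb w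
  exact (mem_ball_zero_iff.1 hmem).le

lemma exists_norm_sub_mixedEmbedding_le (v : mixedSpace K) :
    ∃ b : 𝓞 K, ‖v - mixedEmbedding K b‖ ≤
      finrank ℚ K * ((2 ^ finrank ℚ K + 2) * absDiscr K) ^ finrank ℚ K := by
  have hD := one_le_absDiscr K
  obtain ⟨θ, hθ, hθ_le⟩ := exists_primitive_element_norm_le K
  set T := (2 ^ finrank ℚ K + 2) * absDiscr K
  have hT : 1 ≤ T := by
    have hpow : (0 : ℝ) < 2 ^ finrank ℚ K := by positivity
    exact one_le_mul_of_one_le_of_one_le (by linarith) hD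
  have hv : v ∈ Submodule.span ℝ
      (range fun i : Fin (finrank ℚ K) => mixedEmbedding K θ ^ (i : ℕ)) :=
    span_range_pow_eq_top hθ ▸ Submodule.mem_top
  obtain ⟨c, rfl⟩ := (Submodule.mem_span_range_iff_exists_fun ℝ).1 hv
  refine ⟨∑ i : Fin (finrank ℚ K), (round (c i) : 𝓞 K) * θ ^ (i : ℕ), ?_⟩
  have hround : mixedEmbedding K
      (∑ i : Fin (finrank ℚ K), (round (c i) : 𝓞 K) * θ ^ (i : ℕ) : 𝓞 K) =
      ∑ i : Fin (finrank ℚ K), (round (c i) : ℝ) • mixedEmbedding K θ ^ (i : ℕ) := by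
    simp only [map_mul, map_sum, map_pow, map_intCast]
    congr 1
  rw [hround, ← Finset.sum_sub_distrib]
  calc ‖∑ i : Fin (finrank ℚ K), (c i • mixedEmbedding K θ ^ (i : ℕ) -
        (round (c i) : ℝ) • mixedEmbedding K θ ^ (i : ℕ))‖
      ≤ ∑ _i : Fin (finrank ℚ K), T ^ finrank ℚ K := by
        refine norm_sum_le_of_le _ fun i _ => ?_
        rw [← sub_smul, _root_.norm_smul, ← one_mul (T ^ _)]
        gcongr
        · exact (abs_sub_round (c i)).trans (by norm_num)
        · calc ‖mixedEmbedding K θ ^ (i : ℕ)‖ ≤ ‖mixedEmbedding K θ‖ ^ (i : ℕ) := norm_pow_le _ _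
            _ ≤ T ^ (i : ℕ) := by gcongr
            _ ≤ T ^ finrank ℚ K := pow_le_pow_right₀ hT i.2.le
    _ = finrank ℚ K * T ^ finrank ℚ K := by simp

lemma exists_mem_norm_mul_sub_le (J : (Ideal (𝓞 K))⁰) {x : mixedSpace K}
    (hx : mixedEmbedding.norm x ≠ 0) (v : mixedSpace K) :
    ∃ a ∈ (J : Ideal (𝓞 K)), ‖x * (v - mixedEmbedding K a)‖ ≤
      coveringConstant (finrank ℚ K) (absDiscr K) * twistedNorm J x ^ (finrank ℚ K : ℝ)⁻¹ := by
  obtain ⟨a, haJ, ha0, hshort⟩ := exists_ne_zero_norm_mul_le J hx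
  obtain ⟨b, hb⟩ := exists_norm_sub_mixedEmbedding_le (mixedEmbedding K (a : K)⁻¹ * v)
  refine ⟨a * b, mul_mem_right _ _ haJ, ?_⟩
  have hscale : x * (v - mixedEmbedding K (a * b : 𝓞 K)) =
      (x * mixedEmbedding K a) * (mixedEmbedding K (a : K)⁻¹ * v - mixedEmbedding K b) := by
    have hinv : mixedEmbedding K a * mixedEmbedding K (a : K)⁻¹ = 1 := by
      rw [← map_mul, mul_inv_cancel₀ (by simpa using ha0), map_one]
    push_cast
    rw [map_mul]
    linear_combination (-x * v) * hinv
  calc ‖x * (v - mixedEmbedding K (a * b : 𝓞 K))‖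
      ≤ ‖x * mixedEmbedding K a‖ * ‖mixedEmbedding K (a : K)⁻¹ * v - mixedEmbedding K b‖ := by
        rw [hscale]
        exact norm_mul_le _ _
    _ ≤ _ := mul_le_mul hshort hb (_root_.norm_nonneg _) ((_root_.norm_nonneg _).trans hshort)
    _ = coveringConstant (finrank ℚ K) (absDiscr K) * twistedNorm J x ^ (finrank ℚ K : ℝ)⁻¹ := by
        rw [coveringConstant]
        ring

end GeometryOfNumbers

section LatticeCount

open mixedEmbedding InfinitePlace Ideal
open scoped ENNReal NNReal nonZeroDivisors

section

variable {E : Type*} [NormedAddCommGroup E] [MeasurableSpace E] [BorelSpace E] {μ : Measure E}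
  [μ.IsAddLeftInvariant] {L : AddSubgroup E} [Countable L] {D S T : Set E}

lemma measure_eq_lintegral_tsum_indicator (hD : IsAddFundamentalDomain L D μ)
    (hS : MeasurableSet S) :
    μ S = ∫⁻ y in D, ∑' g : L, S.indicator (1 : E → ℝ≥0∞) (g + y) ∂μ := by
  rw [← lintegral_indicator_one hS, hD.lintegral_eq_tsum'', ← lintegral_tsum]
  · rfl
  · exact fun g => ((measurable_one.indicator hS).comp (measurable_const_add _)).aemeasurable

lemma measure_le_mul_tsum_indicator (hD : IsAddFundamentalDomain L D μ) (hS : MeasurableSet S)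
    (hST : ∀ y, ∃ h : L, ∀ g : L, (g : E) + y ∈ S → (g : E) + h ∈ T) :
    μ S ≤ μ D * ∑' g : L, T.indicator (1 : E → ℝ≥0∞) g := by
  rw [measure_eq_lintegral_tsum_indicator hD hS, mul_comm, ← setLIntegral_const]
  refine lintegral_mono fun y => ?_
  obtain ⟨h, hh⟩ := hST y
  rw [← (Equiv.addRight h).tsum_eq (fun g : L => T.indicator (1 : E → ℝ≥0∞) g)]
  refine ENNReal.tsum_le_tsum fun g => ?_
  simp only [Equiv.coe_addRight, AddSubgroup.coe_add]
  by_cases hg : (g : E) + y ∈ S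
  · simp only [indicator_of_mem hg, indicator_of_mem (hh g hg), Pi.one_apply, le_refl]
  · simp only [indicator_of_notMem hg, zero_le]

lemma mul_tsum_indicator_le_measure (hD : IsAddFundamentalDomain L D μ) (hT : MeasurableSet T)
    (hST : ∀ y, ∃ h : L, ∀ g : L, (g : E) + h ∈ S → (g : E) + y ∈ T) :
    μ D * ∑' g : L, S.indicator (1 : E → ℝ≥0∞) g ≤ μ T := by
  rw [measure_eq_lintegral_tsum_indicator hD hT, mul_comm, ← setLIntegral_const]
  refine lintegral_mono fun y => ?_
  obtain ⟨h, hh⟩ := hST y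
  rw [← (Equiv.addRight h).tsum_eq (fun g : L => S.indicator (1 : E → ℝ≥0∞) g)]
  refine ENNReal.tsum_le_tsum fun g => ?_
  simp only [Equiv.coe_addRight, AddSubgroup.coe_add]
  by_cases hg : (g : E) + h ∈ S
  · simp only [indicator_of_mem hg, indicator_of_mem (hh g hg), Pi.one_apply, le_refl]
  · simp only [indicator_of_notMem hg, zero_le]

end

lemma one_sub_mul_one_add_pow_le (n : ℕ) {r t : ℝ} (hr : 0 ≤ r) (ht : 0 ≤ t) :
    1 - t * (1 + r) ^ n ≤ 1 - n * (r * t) := by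
  have hbernoulli : 1 + n * r ≤ (1 + r) ^ n := one_add_mul_le_pow (by linarith) n
  nlinarith

lemma one_add_mul_pow_le {n : ℕ} {r t : ℝ} (hr : 0 ≤ r) (ht : 0 ≤ t) (ht' : t ≤ 1) :
    (1 + r * t) ^ n ≤ 1 + t * (1 + r) ^ n := by
  have hconvex := (convexOn_pow (𝕜 := ℝ) n).2 (mem_Ici.2 zero_le_one)
    (mem_Ici.2 (by linarith : 0 ≤ 1 + r)) (sub_nonneg.2 ht') ht (sub_add_cancel 1 t)
  simp only [smul_eq_mul, one_pow, mul_one] at hconvex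
  calc (1 + r * t) ^ n = (1 - t + t * (1 + r)) ^ n := by ring
    _ ≤ 1 + t * (1 + r) ^ n := by linarith

lemma abs_sub_le_of_pow_bounds {n : ℕ} (hn : n ≠ 0) {A c r t : ℝ} (hA : 0 ≤ A) (hc : 0 ≤ c)
    (hr : 0 ≤ r) (ht : 0 ≤ t) (ht' : t ≤ 1) (hlower : r * t ≤ 1 → A * (1 - r * t) ^ n ≤ 1 + c)
    (hupper : 1 + c ≤ A * (1 + r * t) ^ n) :
    |c - A| ≤ A * t * (1 + r) ^ n + 1 := by
  rw [abs_le]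
  constructor
  · suffices h : A * (1 - t * (1 + r) ^ n) ≤ 1 + c by linarith
    rcases le_or_gt (r * t) 1 with hrt | hrt
    · refine le_trans ?_ (hlower hrt)
      gcongr
      have hbernoulli := one_add_mul_le_pow (a := -(r * t)) (by linarith) n
      rw [← sub_eq_add_neg] at hbernoulli
      linarith [one_sub_mul_one_add_pow_le n hr ht]
    · have hnrt : r * t ≤ n * (r * t) :=
        le_mul_of_one_le_left (by positivity) (mod_cast Nat.one_le_iff_ne_zero.2 hn)
      have hneg : 1 - t * (1 + r) ^ n ≤ 0 := by linarith [one_sub_mul_one_add_pow_le n hr ht]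
      linarith [mul_nonpos_of_nonneg_of_nonpos hA hneg]
  · have hle : A * (1 + r * t) ^ n ≤ A * (1 + t * (1 + r) ^ n) := by
      gcongr
      exact one_add_mul_pow_le hr ht ht'
    linarith

variable {K : Type*} [Field K] [NumberField K]

/-- The number of nonzero elements of the lattice `x J` in the unit ball of the mixed space. -/
noncomputable def latticeCount (J : (Ideal (𝓞 K))⁰) (x : mixedSpace K) : ℝ≥0∞ :=
  ∑' a : {a : 𝓞 K // a ∈ (J : Ideal (𝓞 K)) ∧ a ≠ 0},
    (Metric.closedBall (0 : mixedSpace K) 1).indicator 1 (mixedEmbedding K a.1 * x)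

variable (K) in
/-- The limiting density of lattice points: `latticeCount J x` is asymptotic to
`countDensity K / twistedNorm J x`. -/
noncomputable def countDensity : ℝ := convexBodyLTFactor K / integerCovolume K

/-- A bound for the error of the lattice point count in degree `n` and absolute
discriminant `D`. -/
noncomputable def countErrorConstant (n : ℕ) (D : ℝ) : ℝ :=
  8 ^ n * (1 + coveringConstant n D) ^ n + 1

variable (K) in
lemma countDensity_pos : 0 < countDensity K :=
  div_pos (zero_lt_one.trans_le (one_le_coe_convexBodyLTFactor K)) (integerCovolume_pos K)

variable (K) in
lemma countDensity_le : countDensity K ≤ 8 ^ finrank ℚ K := by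
  calc countDensity K = convexBodyLTFactor K * (integerCovolume K)⁻¹ := div_eq_mul_inv _ _
    _ ≤ 4 ^ finrank ℚ K * 2 ^ finrank ℚ K := by
        gcongr
        · exact (inv_pos.2 (integerCovolume_pos K)).le
        · exact convexBodyLTFactor_le K
        · exact inv_integerCovolume_le K
    _ = 8 ^ finrank ℚ K := by
        rw [← mul_pow]
        norm_num

lemma coveringConstant_nonneg (n : ℕ) {D : ℝ} (hD : 0 ≤ D) : 0 ≤ coveringConstant n D := by
  unfold coveringConstant
  positivity

lemma mem_idealLattice_mk0_iff (J : (Ideal (𝓞 K))⁰) {v : mixedSpace K} :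
    v ∈ idealLattice K (FractionalIdeal.mk0 K J) ↔
      ∃ a ∈ (J : Ideal (𝓞 K)), mixedEmbedding K a = v := by
  simp only [mem_idealLattice, FractionalIdeal.coe_mk0, SetLike.mem_coe,
    FractionalIdeal.mem_coeIdeal]
  constructor
  · rintro ⟨_, ⟨a, ha, rfl⟩, rfl⟩
    exact ⟨a, ha, rfl⟩
  · rintro ⟨a, ha, rfl⟩
    exact ⟨a, ⟨a, ha, rfl⟩, rfl⟩

variable (K) in
lemma countable_ringOfIntegers : Countable (𝓞 K) :=
  (Module.Free.chooseBasis ℤ (𝓞 K)).equivFun.injective.countable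

/-- The parametrisation of the lattice of an integral ideal by its elements. -/
noncomputable def idealEquivLattice (J : (Ideal (𝓞 K))⁰) :
    (J : Ideal (𝓞 K)) ≃ (idealLattice K (FractionalIdeal.mk0 K J)).toAddSubgroup :=
  Equiv.ofBijective
    (fun a => ⟨mixedEmbedding K (a : 𝓞 K), (mem_idealLattice_mk0_iff J).2 ⟨a, a.2, rfl⟩⟩)
    ⟨fun a b hab => Subtype.ext (RingOfIntegers.ext (mixedEmbedding_injective K
      (congrArg Subtype.val hab))), by
      rintro ⟨v, hv⟩
      obtain ⟨a, ha, rfl⟩ := (mem_idealLattice_mk0_iff J).1 hv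
      exact ⟨⟨a, ha⟩, rfl⟩⟩

lemma tsum_indicator_idealLattice (J : (Ideal (𝓞 K))⁰) (x : mixedSpace K) :
    ∑' g : (idealLattice K (FractionalIdeal.mk0 K J)).toAddSubgroup,
      ((x * ·) ⁻¹' Metric.closedBall 0 1).indicator (1 : mixedSpace K → ℝ≥0∞) g =
      1 + latticeCount J x := by
  let f : 𝓞 K → ℝ≥0∞ := fun a => (Metric.closedBall 0 1).indicator 1 (mixedEmbedding K a * x)
  have hf (a : (J : Ideal (𝓞 K))) : ((x * ·) ⁻¹' Metric.closedBall 0 1).indicator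
      (1 : mixedSpace K → ℝ≥0∞) (idealEquivLattice J a) = f a := by
    simp only [f, mul_comm _ x]
    exact indicator_comp_right (x * ·) (g := (1 : mixedSpace K → ℝ≥0∞))
  rw [← (idealEquivLattice J).tsum_eq, tsum_congr hf, latticeCount]
  change ∑' a : (J : Set (𝓞 K)), f a = 1 + ∑' a : {a : 𝓞 K | a ∈ (J : Ideal (𝓞 K)) ∧ a ≠ 0}, f a
  rw [tsum_subtype, tsum_subtype, ENNReal.tsum_eq_add_tsum_ite 0]
  congr 1
  · simp [f, indicator]
  · refine tsum_congr fun a => ?_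
    by_cases ha : a = 0 <;> simp [indicator, ha]

lemma volume_preimage_mul_left_closedBall {x : mixedSpace K} (hx : mixedEmbedding.norm x ≠ 0)
    {r : ℝ} (hr : 0 ≤ r) :
    volume ((x * ·) ⁻¹' Metric.closedBall 0 r) =
      ENNReal.ofReal (convexBodyLTFactor K * (r ^ finrank ℚ K / mixedEmbedding.norm x)) := by
  rw [volume_preimage_mul_left hx measurableSet_closedBall,
    Measure.addHaar_closedBall_eq_addHaar_ball,
    ← volume_preimage_mul_left hx measurableSet_ball, volume_preimage_mul_left_ball hx hr,
    ENNReal.ofReal_mul (by positivity), ENNReal.ofReal_coe_nnreal]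

section

variable {J : (Ideal (𝓞 K))⁰} {x : mixedSpace K} {ρ : ℝ}

lemma ofReal_mul_one_add_latticeCount_le
    (hρ : ∀ v, ∃ a ∈ (J : Ideal (𝓞 K)), ‖x * (v - mixedEmbedding K a)‖ ≤ ρ) :
    ENNReal.ofReal (absNorm (J : Ideal (𝓞 K)) * integerCovolume K) * (1 + latticeCount J x) ≤
      volume ((x * ·) ⁻¹' Metric.closedBall 0 (1 + ρ)) := by
  rw [← volume_fundamentalDomain_ideal, ← tsum_indicator_idealLattice]
  have := countable_ringOfIntegers K
  have : Countable (idealLattice K (FractionalIdeal.mk0 K J)).toAddSubgroup :=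
    (idealEquivLattice J).symm.injective.countable
  refine mul_tsum_indicator_le_measure (fundamentalDomain_idealLattice K _)
    (measurableSet_closedBall.preimage (measurable_const_mul x)) fun y => ?_
  obtain ⟨a, ha, hle⟩ := hρ y
  refine ⟨⟨mixedEmbedding K a, (mem_idealLattice_mk0_iff J).2 ⟨a, ha, rfl⟩⟩, fun g hg => ?_⟩
  rw [mem_preimage, mem_closedBall_zero_iff] at hg ⊢
  rw [show x * (g + y) = x * (g + mixedEmbedding K a) + x * (y - mixedEmbedding K a) by ring]
  exact norm_add_le_of_le hg hle

lemma volume_le_ofReal_mul_one_add_latticeCount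
    (hρ : ∀ v, ∃ a ∈ (J : Ideal (𝓞 K)), ‖x * (v - mixedEmbedding K a)‖ ≤ ρ) :
    volume ((x * ·) ⁻¹' Metric.closedBall 0 (1 - ρ)) ≤
      ENNReal.ofReal (absNorm (J : Ideal (𝓞 K)) * integerCovolume K) * (1 + latticeCount J x) := by
  rw [← volume_fundamentalDomain_ideal, ← tsum_indicator_idealLattice]
  have := countable_ringOfIntegers K
  have : Countable (idealLattice K (FractionalIdeal.mk0 K J)).toAddSubgroup :=
    (idealEquivLattice J).symm.injective.countable
  refine measure_le_mul_tsum_indicator (fundamentalDomain_idealLattice K _)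
    (measurableSet_closedBall.preimage (measurable_const_mul x)) fun y => ?_
  obtain ⟨a, ha, hle⟩ := hρ y
  refine ⟨⟨mixedEmbedding K a, (mem_idealLattice_mk0_iff J).2 ⟨a, ha, rfl⟩⟩, fun g hg => ?_⟩
  rw [mem_preimage, mem_closedBall_zero_iff] at hg ⊢
  rw [show x * (g + mixedEmbedding K a) = x * (g + y) - x * (y - mixedEmbedding K a) by ring]
  exact (norm_sub_le_of_le hg hle).trans_eq (sub_add_cancel 1 ρ)

lemma ofReal_mul_one_add_eq (hfin : latticeCount J x ≠ ⊤) :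
    ENNReal.ofReal (absNorm (J : Ideal (𝓞 K)) * integerCovolume K) * (1 + latticeCount J x) =
      ENNReal.ofReal (absNorm (J : Ideal (𝓞 K)) * integerCovolume K *
        (1 + (latticeCount J x).toReal)) := by
  have hcov := (integerCovolume_pos K).le
  rw [ENNReal.ofReal_mul (p := _ * integerCovolume K) (by positivity),
    ENNReal.ofReal_add zero_le_one ENNReal.toReal_nonneg, ENNReal.ofReal_one,
    ENNReal.ofReal_toReal hfin]

lemma latticeCount_ne_top (hx : mixedEmbedding.norm x ≠ 0) : latticeCount J x ≠ ⊤ := by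
  intro htop
  have hcov := integerCovolume_pos K
  have hJ := one_le_absNorm J
  have hρ : 0 ≤ coveringConstant (finrank ℚ K) (absDiscr K) *
      twistedNorm J x ^ (finrank ℚ K : ℝ)⁻¹ :=
    mul_nonneg (coveringConstant_nonneg _ (zero_le_one.trans (one_le_absDiscr K)))
      (Real.rpow_nonneg (twistedNorm_pos J hx).le _)
  have hle := ofReal_mul_one_add_latticeCount_le (exists_mem_norm_mul_sub_le J hx)
  rw [volume_preimage_mul_left_closedBall hx (by positivity), htop, add_top,
    ENNReal.mul_top (ENNReal.ofReal_pos.2 (by positivity)).ne', top_le_iff] at hle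
  exact ENNReal.ofReal_ne_top hle

lemma countDensity_div_twistedNorm_mul (r : ℝ) :
    countDensity K / twistedNorm J x * r ^ finrank ℚ K =
      convexBodyLTFactor K * (r ^ finrank ℚ K / mixedEmbedding.norm x) /
        (absNorm (J : Ideal (𝓞 K)) * integerCovolume K) := by
  rw [countDensity, twistedNorm]
  field_simp

lemma one_add_latticeCount_le (hx : mixedEmbedding.norm x ≠ 0) (hρ0 : 0 ≤ ρ)
    (hρ : ∀ v, ∃ a ∈ (J : Ideal (𝓞 K)), ‖x * (v - mixedEmbedding K a)‖ ≤ ρ) :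
    1 + (latticeCount J x).toReal ≤
      countDensity K / twistedNorm J x * (1 + ρ) ^ finrank ℚ K := by
  have hcov := integerCovolume_pos K
  have hJ := one_le_absNorm J
  have hx' := norm_pos_of_ne_zero hx
  have hle := ofReal_mul_one_add_latticeCount_le hρ
  rw [ofReal_mul_one_add_eq (latticeCount_ne_top hx),
    volume_preimage_mul_left_closedBall hx (by positivity),
    ENNReal.ofReal_le_ofReal_iff (by positivity)] at hle
  rwa [countDensity_div_twistedNorm_mul, le_div_iff₀' (by positivity)]

lemma le_one_add_latticeCount (hx : mixedEmbedding.norm x ≠ 0) (hρ1 : ρ ≤ 1)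
    (hρ : ∀ v, ∃ a ∈ (J : Ideal (𝓞 K)), ‖x * (v - mixedEmbedding K a)‖ ≤ ρ) :
    countDensity K / twistedNorm J x * (1 - ρ) ^ finrank ℚ K ≤
      1 + (latticeCount J x).toReal := by
  have hcov := integerCovolume_pos K
  have hJ := one_le_absNorm J
  have hle := volume_le_ofReal_mul_one_add_latticeCount hρ
  rw [ofReal_mul_one_add_eq (latticeCount_ne_top hx),
    volume_preimage_mul_left_closedBall hx (sub_nonneg.2 hρ1),
    ENNReal.ofReal_le_ofReal_iff (by positivity)] at hle
  rwa [countDensity_div_twistedNorm_mul, div_le_iff₀' (by positivity)]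

lemma abs_latticeCount_sub_le (hx : mixedEmbedding.norm x ≠ 0) (hn : twistedNorm J x ≤ 1) :
    |(latticeCount J x).toReal - countDensity K / twistedNorm J x| ≤
      countErrorConstant (finrank ℚ K) (absDiscr K) *
        twistedNorm J x ^ ((finrank ℚ K : ℝ)⁻¹ - 1) := by
  have hn0 := twistedNorm_pos J hx
  set n := twistedNorm J x
  set d := finrank ℚ K
  set t := n ^ (d : ℝ)⁻¹
  have ht0 : 0 ≤ t := Real.rpow_nonneg hn0.le _
  have hd : d ≠ 0 := finrank_pos.ne'
  set ρ := coveringConstant d (absDiscr K)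
  have hρ0 : 0 ≤ ρ := coveringConstant_nonneg _ (zero_le_one.trans (one_le_absDiscr K))
  have htn : n ^ ((d : ℝ)⁻¹ - 1) = t / n := by rw [Real.rpow_sub hn0, Real.rpow_one]
  have hone : 1 ≤ t / n := by
    rw [← htn]
    refine Real.one_le_rpow_of_pos_of_le_one_of_nonpos hn0 hn (sub_nonpos.2 ?_)
    exact inv_le_one_of_one_le₀ (mod_cast Nat.one_le_iff_ne_zero.2 hd)
  have hκ := countDensity_pos K
  calc |(latticeCount J x).toReal - countDensity K / n|
      ≤ countDensity K / n * t * (1 + ρ) ^ d + 1 :=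
        abs_sub_le_of_pow_bounds hd (by positivity) ENNReal.toReal_nonneg hρ0 ht0
          (Real.rpow_le_one hn0.le hn (by positivity))
          (fun hρt => le_one_add_latticeCount hx hρt (exists_mem_norm_mul_sub_le J hx))
          (one_add_latticeCount_le hx (by positivity) (exists_mem_norm_mul_sub_le J hx))
    _ = countDensity K * (1 + ρ) ^ d * (t / n) + 1 := by ring
    _ ≤ 8 ^ d * (1 + ρ) ^ d * (t / n) + t / n := by
        gcongr
        exact countDensity_le K
    _ = countErrorConstant d (absDiscr K) * n ^ ((d : ℝ)⁻¹ - 1) := by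
        rw [htn, countErrorConstant]
        ring

end

lemma norm_mixedEmbedding_eq_absNorm_span (a : 𝓞 K) :
    mixedEmbedding.norm (mixedEmbedding K a) = absNorm (span {a}) := by
  rw [norm_eq_norm, absNorm_span_singleton, ← Algebra.coe_norm_int, Nat.cast_natAbs]
  push_cast
  rfl

lemma norm_le_one_of_mem_closedBall {x : mixedSpace K}
    (hx : x ∈ Metric.closedBall (0 : mixedSpace K) 1) : mixedEmbedding.norm x ≤ 1 := by
  rw [mem_closedBall_zero_iff, norm_le_iff_normAtPlace_le] at hx
  rw [mixedEmbedding.norm_apply]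
  exact Finset.prod_le_one (fun w _ => pow_nonneg (normAtPlace_nonneg _ _) _) fun w _ =>
    pow_le_one₀ (normAtPlace_nonneg _ _) (hx w)

lemma latticeCount_eq_zero {J : (Ideal (𝓞 K))⁰} {x : mixedSpace K} (h : 1 < twistedNorm J x) :
    latticeCount J x = 0 := by
  rw [latticeCount, ENNReal.tsum_eq_zero]
  rintro ⟨a, ha, ha0⟩
  refine indicator_of_notMem (fun hmem => h.not_ge ?_) _
  have hdvd : absNorm (J : Ideal (𝓞 K)) ∣ absNorm (span {a}) :=
    absNorm_dvd_absNorm_of_le ((span_singleton_le_iff_mem _).2 ha)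
  have hne : absNorm (span {a}) ≠ 0 := by
    rwa [ne_eq, absNorm_eq_zero_iff, span_singleton_eq_bot]
  calc twistedNorm J x ≤ mixedEmbedding.norm x * mixedEmbedding.norm (mixedEmbedding K a) := by
        rw [twistedNorm, norm_mixedEmbedding_eq_absNorm_span]
        gcongr
        · exact mixedEmbedding.norm_nonneg x
        · exact Nat.le_of_dvd (Nat.pos_of_ne_zero hne) hdvd
    _ = mixedEmbedding.norm (mixedEmbedding K a * x) := by rw [map_mul, mul_comm]
    _ ≤ 1 := norm_le_one_of_mem_closedBall hmem

end LatticeCount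

section Unfolding

open mixedEmbedding InfinitePlace Ideal
open scoped ENNReal NNReal nonZeroDivisors

variable {K : Type*} [Field K] [NumberField K]

variable (K) in
lemma countable_units : Countable (𝓞 K)ˣ :=
  have := countable_ringOfIntegers K
  Units.val_injective.countable

variable (K) in
lemma countable_ideals : Countable (Ideal (𝓞 K)) :=
  have := countable_ringOfIntegers K
  Function.Surjective.countable (f := fun s : Finset (𝓞 K) => span (s : Set (𝓞 K))) fun I =>
    (isNoetherianRing_iff_ideal_fg (𝓞 K)).1 inferInstance I

lemma ae_normAtPlace_ne_zero (w : InfinitePlace K) :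
    ∀ᵐ x : mixedSpace K, normAtPlace w x ≠ 0 := by
  let p : Submodule ℝ (mixedSpace K) :=
    { carrier := {x | normAtPlace w x = 0}
      add_mem' := fun {x y} (hx : normAtPlace w x = 0) (hy : normAtPlace w y = 0) =>
        ((normAtPlace_add_le w x y).trans_eq (by rw [hx, hy, add_zero])).antisymm
          (normAtPlace_nonneg w _)
      zero_mem' := map_zero _
      smul_mem' := fun c x (hx : normAtPlace w x = 0) =>
        (normAtPlace_smul w x c).trans (by rw [hx, mul_zero]) }
  have hp : p ≠ ⊤ := fun h => one_ne_zero <|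
    (map_one (normAtPlace w)).symm.trans (h ▸ Submodule.mem_top : (1 : mixedSpace K) ∈ p)
  refine (measure_mono_null (fun x hx => ?_) (Measure.addHaar_submodule volume p hp) :)
  exact not_not.1 hx

variable (K) in
lemma ae_norm_ne_zero : ∀ᵐ x : mixedSpace K, mixedEmbedding.norm x ≠ 0 := by
  filter_upwards [ae_all_iff.2 (ae_normAtPlace_ne_zero (K := K))] with x hx
  rw [mixedEmbedding.norm_apply]
  exact Finset.prod_ne_zero_iff.2 fun w _ => pow_ne_zero _ (hx w)

lemma tsum_indicator_unit_smul_fundamentalCone {x : mixedSpace K}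
    (hx : mixedEmbedding.norm x ≠ 0) :
    ∑' u : (𝓞 K)ˣ, (fundamentalCone K).indicator (1 : mixedSpace K → ℝ≥0∞) (u • x) =
      Units.torsionOrder K := by
  obtain ⟨u₀, hu₀⟩ := fundamentalCone.exists_unit_smul_mem hx
  have hmem (u : (𝓞 K)ˣ) : (fundamentalCone K).indicator (1 : mixedSpace K → ℝ≥0∞)
      (Equiv.mulRight u₀ u • x) = (Units.torsion K : Set (𝓞 K)ˣ).indicator 1 u := by
    simp only [indicator, Equiv.coe_mulRight, mul_smul,
      fundamentalCone.unit_smul_mem_iff_mem_torsion hu₀ u, SetLike.mem_coe, Pi.one_apply]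
  rw [← (Equiv.mulRight u₀).tsum_eq, tsum_congr hmem, ← tsum_subtype]
  simp only [Pi.one_apply]
  rw [ENNReal.tsum_set_one, ← ENat.card_coe_set_eq]
  change (ENat.card (Units.torsion K) : ℝ≥0∞) = Nat.card (Units.torsion K)
  rw [ENat.card_eq_coe_natCard, ENat.toENNReal_coe]

lemma lintegral_fundamentalCone_unit_smul {φ : mixedSpace K → ℝ≥0∞} (hφ : Measurable φ)
    (u : (𝓞 K)ˣ) :
    ∫⁻ x in fundamentalCone K, φ (u • x) =
      ∫⁻ x, (fundamentalCone K).indicator 1 (u⁻¹ • x) * φ x := by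
  have hcone : Measurable ((fundamentalCone K).indicator (1 : mixedSpace K → ℝ≥0∞)) :=
    measurable_one.indicator (measurableSet_fundamentalCone K)
  have hsmul := lintegral_comp_mul_left (x := mixedEmbedding K (u : 𝓞 K))
    (φ := fun x => (fundamentalCone K).indicator 1 (u⁻¹ • x) * φ x) (by simp)
    ((hcone.comp (measurable_const_mul (mixedEmbedding K ((u⁻¹ : (𝓞 K)ˣ) : 𝓞 K)))).mul hφ)
  rw [norm_unit, ENNReal.ofReal_one, inv_one, one_mul] at hsmul
  simp only [← unitSMul_smul, inv_smul_smul] at hsmul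
  rw [← hsmul, ← lintegral_indicator (measurableSet_fundamentalCone K)]
  exact lintegral_congr fun x => by simp [indicator]

lemma tsum_lintegral_fundamentalCone_unit_smul {φ : mixedSpace K → ℝ≥0∞} (hφ : Measurable φ) :
    ∑' u : (𝓞 K)ˣ, ∫⁻ x in fundamentalCone K, φ (u • x) =
      Units.torsionOrder K * ∫⁻ x, φ x := by
  have := countable_units K
  have hmeas (u : (𝓞 K)ˣ) :
      Measurable fun x => (fundamentalCone K).indicator (1 : mixedSpace K → ℝ≥0∞) (u⁻¹ • x) * φ x :=
    ((measurable_one.indicator (measurableSet_fundamentalCone K)).comp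
      (measurable_const_mul (mixedEmbedding K ((u⁻¹ : (𝓞 K)ˣ) : 𝓞 K)))).mul hφ
  simp only [lintegral_fundamentalCone_unit_smul hφ]
  rw [← lintegral_tsum fun u => (hmeas u).aemeasurable, ← lintegral_const_mul _ hφ]
  refine lintegral_congr_ae ?_
  filter_upwards [ae_norm_ne_zero K] with x hx
  rw [ENNReal.tsum_mul_right, ← tsum_indicator_unit_smul_fundamentalCone hx,
    ← (Equiv.inv (𝓞 K)ˣ).tsum_eq fun u => (fundamentalCone K).indicator 1 (u • x)]
  rfl

lemma tsum_lintegral_fundamentalCone_mul_unit_smul {φ : mixedSpace K → ℝ≥0∞} (hφ : Measurable φ)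
    {y : mixedSpace K} (hy : mixedEmbedding.norm y ≠ 0) :
    ∑' u : (𝓞 K)ˣ, ∫⁻ x in fundamentalCone K, φ (y * (u • x)) =
      Units.torsionOrder K * ((ENNReal.ofReal (mixedEmbedding.norm y))⁻¹ * ∫⁻ x, φ x) := by
  rw [tsum_lintegral_fundamentalCone_unit_smul (φ := fun x => φ (y * x))
    (hφ.comp (measurable_const_mul y)), lintegral_comp_mul_left hy hφ]

/-- The integral ideals in the class inverse to that of `J`; these are the ideals `I` such that
`I * J` is principal. -/
abbrev InverseClassIdeal (J : (Ideal (𝓞 K))⁰) : Type _ :=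
  ClassGroup.mk0 (R := 𝓞 K) ⁻¹' {(ClassGroup.mk0 J)⁻¹}

lemma mem_inverseClass_iff {I J : (Ideal (𝓞 K))⁰} :
    I ∈ ClassGroup.mk0 (R := 𝓞 K) ⁻¹' {(ClassGroup.mk0 J)⁻¹} ↔
      ∃ a : 𝓞 K, span {a} = (I * J : Ideal (𝓞 K)) := by
  rw [mem_preimage, mem_singleton_iff, ← mul_eq_one_iff_eq_inv, ← map_mul]
  refine (ClassGroup.mk0_eq_one_iff (I * J).2).trans ⟨fun ⟨a, ha⟩ => ⟨a, ha.symm⟩, ?_⟩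
  exact fun ⟨a, ha⟩ => ⟨a, ha.symm⟩

section

variable {J : (Ideal (𝓞 K))⁰}

/-- A generator of the principal ideal `I * J`. -/
noncomputable def generator (I : InverseClassIdeal J) : 𝓞 K :=
  (mem_inverseClass_iff.1 I.2).choose

lemma span_generator (I : InverseClassIdeal J) :
    span {generator I} = (I * J : Ideal (𝓞 K)) :=
  (mem_inverseClass_iff.1 I.2).choose_spec

lemma generator_ne_zero (I : InverseClassIdeal J) : generator I ≠ 0 := by
  rw [ne_eq, ← span_singleton_eq_bot, span_generator]
  exact nonZeroDivisors.ne_zero (I.1 * J).2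

lemma generator_mem (I : InverseClassIdeal J) : generator I ∈ (J : Ideal (𝓞 K)) := by
  rw [← span_singleton_le_iff_mem, span_generator]
  exact Ideal.mul_le_right

lemma norm_mixedEmbedding_generator (I : InverseClassIdeal J) :
    mixedEmbedding.norm (mixedEmbedding K (generator I)) =
      absNorm (I : Ideal (𝓞 K)) * absNorm (J : Ideal (𝓞 K)) := by
  rw [norm_mixedEmbedding_eq_absNorm_span, span_generator, map_mul, Nat.cast_mul]

variable (J) in
/-- A nonzero element of `J` is determined by the ideal `I` with `(a) = I * J` and a unit. -/
noncomputable def inverseClassProdUnitsEquiv :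
    InverseClassIdeal J × (𝓞 K)ˣ ≃ {a : 𝓞 K // a ∈ (J : Ideal (𝓞 K)) ∧ a ≠ 0} :=
  Equiv.ofBijective
    (fun p => ⟨generator p.1 * p.2, mul_mem_right _ _ (generator_mem p.1),
      mul_ne_zero (generator_ne_zero p.1) p.2.ne_zero⟩) <| by
    have hspan (I : InverseClassIdeal J) (u : (𝓞 K)ˣ) :
        span {generator I * u} = (I * J : Ideal (𝓞 K)) := by
      rw [span_singleton_mul_right_unit u.isUnit, span_generator]
    have hJ : (J : Ideal (𝓞 K)) ≠ 0 := nonZeroDivisors.ne_zero J.2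
    constructor
    · rintro ⟨I, u⟩ ⟨I', u'⟩ h
      have hgen : generator I * u = generator I' * u' := congrArg Subtype.val h
      obtain rfl : I = I' := Subtype.ext <| Subtype.ext <| mul_right_cancel₀ hJ <| by
        rw [← hspan I u, hgen, hspan]
      rw [Units.ext (mul_left_cancel₀ (generator_ne_zero I) hgen)]
    · rintro ⟨a, haJ, ha⟩
      obtain ⟨I, hI⟩ := Ideal.dvd_span_singleton.2 haJ
      have hI₀ : I ≠ 0 := by
        rintro rfl
        exact ha (span_singleton_eq_bot.1 (hI.trans (mul_zero _)))
      let I' : InverseClassIdeal J := ⟨⟨I, mem_nonZeroDivisors_of_ne_zero hI₀⟩,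
        mem_inverseClass_iff.2 ⟨a, by rw [hI, mul_comm]⟩⟩
      obtain ⟨u, hu⟩ := span_singleton_eq_span_singleton.1
        (show span {generator I'} = span {a} by rw [span_generator, hI, mul_comm])
      exact ⟨(I', u), Subtype.ext hu⟩

/-- The summand belonging to the ideal `I` after unfolding. -/
noncomputable def unfoldedIntegrand (I : Ideal (𝓞 K)) (k : ℝ → ℝ≥0∞) (y : mixedSpace K) : ℝ≥0∞ :=
  (Metric.closedBall 0 1).indicator (fun y => k (mixedEmbedding.norm y / absNorm I)) y

lemma measurable_unfoldedIntegrand (I : Ideal (𝓞 K)) {k : ℝ → ℝ≥0∞} (hk : Measurable k) :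
    Measurable (unfoldedIntegrand I k) :=
  (hk.comp ((mixedEmbedding.continuous_norm K).measurable.div_const _)).indicator
    measurableSet_closedBall

lemma indicator_mul_eq_unfoldedIntegrand (k : ℝ → ℝ≥0∞) (x : mixedSpace K)
    (I : InverseClassIdeal J) (u : (𝓞 K)ˣ) :
    (Metric.closedBall 0 1).indicator 1 (mixedEmbedding K (generator I * u : 𝓞 K) * x) *
        k (twistedNorm J x) =
      unfoldedIntegrand I.1.1 k (mixedEmbedding K (generator I) * (u • x)) := by
  have hI : (absNorm (I : Ideal (𝓞 K)) : ℝ) ≠ 0 :=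
    (zero_lt_one.trans_le (one_le_absNorm I.1)).ne'
  have hnorm : mixedEmbedding.norm (mixedEmbedding K (generator I) * (u • x)) /
      absNorm (I : Ideal (𝓞 K)) = twistedNorm J x := by
    rw [map_mul, norm_mixedEmbedding_generator, norm_unit_smul, twistedNorm]
    field_simp
  have hmul : mixedEmbedding K (generator I * u : 𝓞 K) * x =
      mixedEmbedding K (generator I) * (u • x) := by
    simp [unitSMul_smul, mul_assoc]
  rw [hmul, unfoldedIntegrand, ← hnorm]
  simp [indicator]

lemma latticeCount_mul_eq_tsum (k : ℝ → ℝ≥0∞) (x : mixedSpace K) :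
    latticeCount J x * k (twistedNorm J x) = ∑' I : InverseClassIdeal J, ∑' u : (𝓞 K)ˣ,
      unfoldedIntegrand I.1.1 k (mixedEmbedding K (generator I) * (u • x)) := by
  rw [latticeCount, ← ENNReal.tsum_mul_right, ← (inverseClassProdUnitsEquiv J).tsum_eq,
    ENNReal.tsum_prod']
  exact tsum_congr fun I => tsum_congr fun u => indicator_mul_eq_unfoldedIntegrand k x I u

lemma lintegral_fundamentalCone_latticeCount {k : ℝ → ℝ≥0∞} (hk : Measurable k) :
    ENNReal.ofReal (absNorm (J : Ideal (𝓞 K))) *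
        ∫⁻ x in fundamentalCone K, latticeCount J x * k (twistedNorm J x) =
      Units.torsionOrder K * ∑' I : InverseClassIdeal J,
        (ENNReal.ofReal (absNorm (I : Ideal (𝓞 K))))⁻¹ * ∫⁻ y, unfoldedIntegrand I.1.1 k y := by
  have := countable_units K
  have := countable_ideals K
  have hmeas (I : InverseClassIdeal J) (u : (𝓞 K)ˣ) : Measurable fun x : mixedSpace K =>
      unfoldedIntegrand I.1.1 k (mixedEmbedding K (generator I) * (u • x)) :=
    (measurable_unfoldedIntegrand _ hk).comp ((measurable_const_mul _).comp
      (measurable_const_mul (mixedEmbedding K (u : 𝓞 K))))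
  have hJ : 0 < (absNorm (J : Ideal (𝓞 K)) : ℝ) := zero_lt_one.trans_le (one_le_absNorm J)
  simp only [latticeCount_mul_eq_tsum]
  rw [lintegral_tsum fun I => (Measurable.tsum (hmeas I)).aemeasurable,
    ← ENNReal.tsum_mul_left, ← ENNReal.tsum_mul_left]
  refine tsum_congr fun I => ?_
  have hI : 0 < (absNorm (I : Ideal (𝓞 K)) : ℝ) := zero_lt_one.trans_le (one_le_absNorm I.1)
  have hJ₀ := ENNReal.mul_inv_cancel (ENNReal.ofReal_pos.2 hJ).ne' ENNReal.ofReal_ne_top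
  rw [lintegral_tsum fun u => (hmeas I u).aemeasurable,
    tsum_lintegral_fundamentalCone_mul_unit_smul (measurable_unfoldedIntegrand _ hk)
      (by rw [norm_mixedEmbedding_generator]; positivity),
    norm_mixedEmbedding_generator, ENNReal.ofReal_mul hI.le, ENNReal.mul_inv (by simp) (by simp)]
  calc
    _ = ENNReal.ofReal (absNorm (J : Ideal (𝓞 K))) *
        (ENNReal.ofReal (absNorm (J : Ideal (𝓞 K))))⁻¹ * (Units.torsionOrder K * ((ENNReal.ofReal
          (absNorm (I : Ideal (𝓞 K))))⁻¹ * ∫⁻ y, unfoldedIntegrand I.1.1 k y)) := by ring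
    _ = _ := by rw [hJ₀, one_mul]

end

/-- A representative of the class inverse to `C`. -/
noncomputable def inverseClassRep (C : ClassGroup (𝓞 K)) : (Ideal (𝓞 K))⁰ :=
  (ClassGroup.mk0_surjective C⁻¹).choose

lemma inv_mk0_inverseClassRep (C : ClassGroup (𝓞 K)) :
    (ClassGroup.mk0 (inverseClassRep C))⁻¹ = C := by
  rw [inverseClassRep, (ClassGroup.mk0_surjective C⁻¹).choose_spec, inv_inv]

lemma sum_tsum_inverseClassIdeal (f : Ideal (𝓞 K) → ℝ≥0∞) :
    ∑ C : ClassGroup (𝓞 K), ∑' I : InverseClassIdeal (inverseClassRep C), f I.1 =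
      ∑' I : {I : Ideal (𝓞 K) // I ≠ ⊥}, f I := by
  rw [← tsum_fintype (L := .unconditional _)]
  rw [tsum_congr fun C => tsum_congr_set_coe (fun I : (Ideal (𝓞 K))⁰ => f I)
    (congrArg (fun C => ClassGroup.mk0 ⁻¹' {C}) (inv_mk0_inverseClassRep C)),
    ENNReal.tsum_fiberwise fun I : (Ideal (𝓞 K))⁰ => f I]
  exact (Equiv.subtypeEquivRight fun I => mem_nonZeroDivisors_iff_ne_zero).tsum_eq
    fun I : {I : Ideal (𝓞 K) // I ≠ ⊥} => f I

theorem sum_lintegral_fundamentalCone_latticeCount {k : ℝ → ℝ≥0∞} (hk : Measurable k) :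
    ∑ C : ClassGroup (𝓞 K), ENNReal.ofReal (absNorm (inverseClassRep C : Ideal (𝓞 K))) *
        ∫⁻ x in fundamentalCone K,
          latticeCount (inverseClassRep C) x * k (twistedNorm (inverseClassRep C) x) =
      Units.torsionOrder K * ∑' I : {I : Ideal (𝓞 K) // I ≠ ⊥},
        (ENNReal.ofReal (absNorm I.1))⁻¹ *
          ∫⁻ y in Metric.closedBall (0 : mixedSpace K) 1,
            k (mixedEmbedding.norm y / absNorm I.1) := by
  simp only [lintegral_fundamentalCone_latticeCount hk]
  rw [← Finset.mul_sum, sum_tsum_inverseClassIdeal fun I =>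
    (ENNReal.ofReal (absNorm I))⁻¹ * ∫⁻ y, unfoldedIntegrand I k y]
  simp only [unfoldedIntegrand, lintegral_indicator measurableSet_closedBall]

end Unfolding

section UnitBallIntegral

open mixedEmbedding InfinitePlace
open scoped ENNReal NNReal

lemma ofReal_prod_cpow {ι : Type*} (S : Finset ι) {f : ι → ℝ} (hf : ∀ i, 0 ≤ f i) (s : ℂ) :
    ((∏ i ∈ S, f i : ℝ) : ℂ) ^ s = ∏ i ∈ S, (f i : ℂ) ^ s := by
  induction S using Finset.induction_on with
  | empty => simp
  | insert a S ha ih =>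
    rw [Finset.prod_insert ha, Finset.prod_insert ha, Complex.ofReal_mul,
      Complex.mul_cpow_ofReal_nonneg (hf a) (Finset.prod_nonneg fun i _ => hf i), ih]

/-- The power function `t ↦ t ^ (s - 1)`, cut off beyond `t = 1`. -/
noncomputable def truncatedCpow (s : ℂ) : ℝ → ℂ :=
  (Iic 1).indicator fun t => (t : ℂ) ^ (s - 1)

lemma pow_smul_truncatedCpow {m : ℕ} (hm : m ≠ 0) (s : ℂ) {y : ℝ} (hy : 0 < y) :
    y ^ (m - 1) • truncatedCpow s (y ^ m) =
      (Iic 1).indicator (fun y : ℝ => (y : ℂ) ^ (m * s - 1)) y := by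
  have hy₀ : (y : ℂ) ≠ 0 := Complex.ofReal_ne_zero.2 hy.ne'
  have hle : y ^ m ∈ Iic 1 ↔ y ∈ Iic 1 := pow_le_one_iff_of_nonneg hy.le hm
  have hpow : (y : ℂ) ^ (m * (s - 1)) = ((y : ℂ) ^ m) ^ (s - 1) := by
    have harg : m * (y : ℂ).arg = 0 := by rw [Complex.arg_ofReal_of_nonneg hy.le, mul_zero]
    exact Complex.cpow_nat_mul' (harg ▸ neg_neg_of_pos Real.pi_pos) (harg ▸ Real.pi_nonneg) _
  by_cases h : y ∈ Iic 1
  · rw [truncatedCpow, indicator_of_mem h, indicator_of_mem (hle.2 h), Complex.real_smul,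
      Complex.ofReal_pow, Complex.ofReal_pow, ← hpow, ← Complex.cpow_natCast,
      ← Complex.cpow_add _ _ hy₀, Nat.cast_pred (Nat.pos_of_ne_zero hm)]
    ring_nf
  · rw [truncatedCpow, indicator_of_notMem h, indicator_of_notMem (mt hle.1 h), smul_zero]

lemma integral_truncatedCpow_norm_pow {E : Type*} [NormedAddCommGroup E] [NormedSpace ℝ E]
    [FiniteDimensional ℝ E] [Nontrivial E] [MeasurableSpace E] [BorelSpace E] (μ : Measure E)
    [μ.IsAddHaarMeasure] {s : ℂ} (hs : 0 < s.re) :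
    ∫ x, truncatedCpow s (‖x‖ ^ finrank ℝ E) ∂μ = μ.real (Metric.ball 0 1) / s := by
  have hm : 0 < finrank ℝ E := finrank_pos
  have hm₀ : (finrank ℝ E : ℂ) ≠ 0 := Nat.cast_ne_zero.2 hm.ne'
  have hs₀ : s ≠ 0 := Complex.ne_zero_of_re_pos hs
  have hms : 0 < (finrank ℝ E * s).re := by
    simpa using mul_pos (Nat.cast_pos.2 hm) hs
  have hradial : ∫ y in Ioi (0 : ℝ), y ^ (finrank ℝ E - 1) • truncatedCpow s (y ^ finrank ℝ E) =
      1 / (finrank ℝ E * s) := by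
    rw [setIntegral_congr_fun measurableSet_Ioi fun y hy => pow_smul_truncatedCpow hm.ne' s hy,
      setIntegral_indicator measurableSet_Iic, Ioi_inter_Iic,
      ← intervalIntegral.integral_of_le zero_le_one,
      integral_cpow (Or.inl (by rw [Complex.sub_re, Complex.one_re]; linarith))]
    simp [Complex.zero_cpow, hm₀, hs₀]
  rw [integral_fun_norm_addHaar μ fun t => truncatedCpow s (t ^ finrank ℝ E), hradial,
    Complex.real_smul, nsmul_eq_mul]
  field_simp

variable {K : Type*} [Field K] [NumberField K]

lemma indicator_norm_cpow_eq_prod (s : ℂ) (x : mixedSpace K) :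
    (Metric.closedBall 0 1).indicator (fun x => (mixedEmbedding.norm x : ℂ) ^ (s - 1)) x =
      ∏ w, truncatedCpow s (normAtPlace w x ^ w.mult) := by
  by_cases hx : x ∈ Metric.closedBall 0 1
  · rw [indicator_of_mem hx, mixedEmbedding.norm_apply,
      ofReal_prod_cpow _ fun w => pow_nonneg (normAtPlace_nonneg w x) _]
    rw [mem_closedBall_zero_iff, norm_le_iff_normAtPlace_le] at hx
    refine Finset.prod_congr rfl fun w _ => ?_
    rw [truncatedCpow, indicator_of_mem]
    exact pow_le_one₀ (normAtPlace_nonneg w x) (hx w)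
  · rw [indicator_of_notMem hx]
    rw [mem_closedBall_zero_iff, norm_le_iff_normAtPlace_le] at hx
    push Not at hx
    obtain ⟨w, hw⟩ := hx
    refine (Finset.prod_eq_zero (Finset.mem_univ w) (indicator_of_notMem ?_ _)).symm
    exact not_le.2 (one_lt_pow₀ hw mult_pos.ne')

variable (K) in
lemma integral_closedBall_norm_cpow {s : ℂ} (hs : 0 < s.re) :
    ∫ x in Metric.closedBall (0 : mixedSpace K) 1, (mixedEmbedding.norm x : ℂ) ^ (s - 1) =
      (convexBodyLTFactor K : ℝ) / s ^ (nrRealPlaces K + nrComplexPlaces K) := by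
  have hreal : ∫ x : ℝ, truncatedCpow s (‖x‖ ^ 1) = 2 / s := by
    simpa using integral_truncatedCpow_norm_pow (volume : Measure ℝ) hs
  have hcomplex : ∫ x : ℂ, truncatedCpow s (‖x‖ ^ 2) = Real.pi / s := by
    simpa [Measure.real, Complex.volume_ball] using
      integral_truncatedCpow_norm_pow (volume : Measure ℂ) hs
  have hprod (x : mixedSpace K) : ∏ w, truncatedCpow s (normAtPlace w x ^ w.mult) =
      (∏ w : {w : InfinitePlace K // IsReal w}, truncatedCpow s (‖x.1 w‖ ^ 1)) *
        ∏ w : {w : InfinitePlace K // IsComplex w}, truncatedCpow s (‖x.2 w‖ ^ 2) := by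
    rw [prod_eq_prod_mul_prod]
    congr 1 <;> refine Finset.prod_congr rfl fun w _ => ?_
    · rw [mult_isReal, normAtPlace_apply_of_isReal w.2]
    · rw [mult_isComplex, normAtPlace_apply_of_isComplex w.2]
  rw [← integral_indicator measurableSet_closedBall]
  simp only [indicator_norm_cpow_eq_prod, hprod]
  refine (integral_prod_mul (μ := (volume : Measure ({w : InfinitePlace K // IsReal w} → ℝ)))
    (ν := (volume : Measure ({w : InfinitePlace K // IsComplex w} → ℂ)))
    (fun x => ∏ w, truncatedCpow s (‖x w‖ ^ 1))
    (fun y => ∏ w, truncatedCpow s (‖y w‖ ^ 2))).trans ?_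
  rw [integral_fintype_prod_volume_eq_prod (fun _ (t : ℝ) => truncatedCpow s (‖t‖ ^ 1)),
    integral_fintype_prod_volume_eq_prod (fun _ (t : ℂ) => truncatedCpow s (‖t‖ ^ 2)), hreal,
    hcomplex]
  simp [convexBodyLTFactor, nrRealPlaces, nrComplexPlaces, pow_add, div_mul_div_comm]

end UnitBallIntegral

section Mellin

open scoped ENNReal

lemma norm_cpow_mul_log_le {t b σ : ℝ} {s : ℂ} (ht : t ∈ Ioc 0 1) (hb : 0 < b)
    (hs : σ + b ≤ s.re) : ‖(t : ℂ) ^ (s - 1) * Complex.log t‖ ≤ b⁻¹ * t ^ (σ - 1) := by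
  have hlog : t ^ b * |Real.log t| ≤ b⁻¹ := by
    have := (Real.abs_log_mul_self_rpow_lt t b ht.1 ht.2 hb).le
    rwa [abs_mul, abs_of_nonneg (Real.rpow_nonneg ht.1.le _), mul_comm, one_div] at this
  rw [norm_mul, Complex.norm_cpow_eq_rpow_re_of_pos ht.1, ← Complex.ofReal_log ht.1.le,
    Complex.norm_real, Real.norm_eq_abs]
  calc t ^ (s - 1).re * |Real.log t| ≤ t ^ (σ - 1 + b) * |Real.log t| := by
        gcongr ?_ * _
        refine Real.rpow_le_rpow_of_exponent_ge ht.1 ht.2 ?_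
        rw [Complex.sub_re, Complex.one_re]
        linarith
    _ = t ^ (σ - 1) * (t ^ b * |Real.log t|) := by rw [Real.rpow_add ht.1, mul_assoc]
    _ ≤ t ^ (σ - 1) * b⁻¹ := by gcongr; exact Real.rpow_nonneg ht.1.le _
    _ = b⁻¹ * t ^ (σ - 1) := mul_comm _ _

variable {Ω : Type*} [MeasurableSpace Ω] {μ : Measure Ω} {n : Ω → ℝ} {c : ℝ≥0∞}

lemma ae_mem_Ioc_of_map_eq (hn : Measurable n)
    (hmap : μ.map n = c • volume.restrict (Ioc 0 1)) : ∀ᵐ x ∂μ, n x ∈ Ioc 0 1 := by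
  refine ae_of_ae_map hn.aemeasurable (p := (· ∈ Ioc (0 : ℝ) 1)) ?_
  rw [hmap]
  exact Measure.ae_smul_measure (ae_restrict_mem measurableSet_Ioc) _

lemma integrable_rpow_of_map_eq (hn : Measurable n) (hc : c ≠ ⊤)
    (hmap : μ.map n = c • volume.restrict (Ioc 0 1)) {a : ℝ} (ha : -1 < a) :
    Integrable (fun x => n x ^ a) μ := by
  have hIoc : IntegrableOn (fun t : ℝ => t ^ a) (Ioc 0 1) :=
    (intervalIntegrable_iff_integrableOn_Ioc_of_le zero_le_one).1
      (intervalIntegral.intervalIntegrable_rpow' ha)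
  exact (hmap ▸ hIoc.smul_measure hc : Integrable _ (μ.map n)).comp_measurable hn

lemma integral_rpow_of_map_eq (hn : Measurable n)
    (hmap : μ.map n = c • volume.restrict (Ioc 0 1)) {a : ℝ} (ha : -1 < a) :
    ∫ x, n x ^ a ∂μ = c.toReal / (a + 1) := by
  have hmeas : Measurable fun t : ℝ => t ^ a := by fun_prop
  rw [← integral_map (f := fun t : ℝ => t ^ a) hn.aemeasurable hmeas.aestronglyMeasurable, hmap,
    integral_smul_measure, ← intervalIntegral.integral_of_le zero_le_one,
    integral_rpow (Or.inl ha), Real.one_rpow, Real.zero_rpow (by linarith), sub_zero, smul_eq_mul,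
    mul_one_div]

lemma integral_cpow_of_map_eq (hn : Measurable n)
    (hmap : μ.map n = c • volume.restrict (Ioc 0 1)) {a : ℂ} (ha : -1 < a.re) :
    ∫ x, (n x : ℂ) ^ a ∂μ = c.toReal / (a + 1) := by
  have hmeas : Measurable fun t : ℝ => (t : ℂ) ^ a := by fun_prop
  have ha₀ : a + 1 ≠ 0 := Complex.ne_zero_of_re_pos (by simpa using neg_lt_iff_pos_add.1 ha)
  rw [← integral_map (f := fun t : ℝ => (t : ℂ) ^ a) hn.aemeasurable hmeas.aestronglyMeasurable,
    hmap, integral_smul_measure, ← intervalIntegral.integral_of_le zero_le_one,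
    integral_cpow (Or.inl ha), Complex.ofReal_one, Complex.one_cpow, Complex.ofReal_zero,
    Complex.zero_cpow ha₀, sub_zero, Complex.real_smul, mul_one_div]

/-- The Mellin transform of `E` with respect to the positive function `n`. -/
noncomputable def mellinAlong (μ : Measure Ω) (n : Ω → ℝ) (E : Ω → ℂ) (s : ℂ) : ℂ :=
  ∫ x, E x * (n x : ℂ) ^ (s - 1) ∂μ

variable {E : Ω → ℂ} {M δ : ℝ}

lemma ae_norm_mul_cpow_le (hn : Measurable n) (hmap : μ.map n = c • volume.restrict (Ioc 0 1))
    (hEM : ∀ᵐ x ∂μ, ‖E x‖ ≤ M * n x ^ (δ - 1)) (s : ℂ) :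
    ∀ᵐ x ∂μ, ‖E x * (n x : ℂ) ^ (s - 1)‖ ≤ M * n x ^ (s.re + δ - 2) := by
  filter_upwards [ae_mem_Ioc_of_map_eq hn hmap, hEM] with x hx hEx
  rw [norm_mul, Complex.norm_cpow_eq_rpow_re_of_pos hx.1]
  refine (mul_le_mul_of_nonneg_right hEx (Real.rpow_nonneg hx.1.le _)).trans_eq ?_
  rw [mul_assoc, ← Real.rpow_add hx.1, Complex.sub_re, Complex.one_re]
  ring_nf

lemma integrable_mul_cpow_of_map_eq (hn : Measurable n) (hc : c ≠ ⊤)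
    (hmap : μ.map n = c • volume.restrict (Ioc 0 1)) (hE : Measurable E)
    (hEM : ∀ᵐ x ∂μ, ‖E x‖ ≤ M * n x ^ (δ - 1)) {s : ℂ} (hs : 1 - δ < s.re) :
    Integrable (fun x => E x * (n x : ℂ) ^ (s - 1)) μ :=
  ((integrable_rpow_of_map_eq hn hc hmap (by linarith)).const_mul M).mono'
    (Measurable.aestronglyMeasurable (by fun_prop)) (ae_norm_mul_cpow_le hn hmap hEM s)

lemma norm_mellinAlong_le (hn : Measurable n) (hc : c ≠ ⊤)
    (hmap : μ.map n = c • volume.restrict (Ioc 0 1))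
    (hEM : ∀ᵐ x ∂μ, ‖E x‖ ≤ M * n x ^ (δ - 1)) {s : ℂ} (hs : 1 - δ < s.re) :
    ‖mellinAlong μ n E s‖ ≤ M * (c.toReal / (s.re - (1 - δ))) := by
  have hint := (integrable_rpow_of_map_eq hn hc hmap
    (by linarith : -1 < s.re + δ - 2)).const_mul M
  refine (norm_integral_le_of_norm_le hint (ae_norm_mul_cpow_le hn hmap hEM s)).trans_eq ?_
  rw [integral_const_mul, integral_rpow_of_map_eq hn hmap (by linarith)]
  ring_nf

lemma differentiableOn_mellinAlong (hn : Measurable n) (hc : c ≠ ⊤)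
    (hmap : μ.map n = c • volume.restrict (Ioc 0 1)) (hE : Measurable E)
    (hEM : ∀ᵐ x ∂μ, ‖E x‖ ≤ M * n x ^ (δ - 1)) :
    DifferentiableOn ℂ (mellinAlong μ n E) {s | 1 - δ < s.re} := by
  intro s₀ (hs₀ : 1 - δ < s₀.re)
  set a := s₀.re - (1 - δ)
  have : 0 < a := sub_pos.2 hs₀
  refine (hasDerivAt_integral_of_dominated_loc_of_deriv_le (μ := μ)
    (F := fun s x => E x * (n x : ℂ) ^ (s - 1))
    (F' := fun s x => E x * ((n x : ℂ) ^ (s - 1) * Complex.log (n x)))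
    (bound := fun x => M * (a / 4)⁻¹ * n x ^ (a / 2 - 1))
    (Metric.ball_mem_nhds s₀ (by positivity : 0 < a / 4))
    (.of_forall fun s => Measurable.aestronglyMeasurable (by fun_prop))
    (integrable_mul_cpow_of_map_eq hn hc hmap hE hEM hs₀)
    (Measurable.aestronglyMeasurable (by fun_prop)) ?_
    ((integrable_rpow_of_map_eq hn hc hmap (by linarith)).const_mul _)
    ?_).2.differentiableAt.differentiableWithinAt
  · filter_upwards [ae_mem_Ioc_of_map_eq hn hmap, hEM] with x hx hEx s hs
    have hre : 1 - δ + a / 2 + a / 4 ≤ s.re := by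
      have := (Complex.abs_re_le_norm (s - s₀)).trans_lt (mem_ball_iff_norm.1 hs)
      rw [Complex.sub_re, abs_lt] at this
      linarith [this.1, (rfl : a = s₀.re - (1 - δ))]
    calc ‖E x * ((n x : ℂ) ^ (s - 1) * Complex.log (n x))‖
        ≤ M * n x ^ (δ - 1) * ((a / 4)⁻¹ * n x ^ (1 - δ + a / 2 - 1)) := by
          rw [norm_mul]
          exact mul_le_mul hEx (norm_cpow_mul_log_le hx (by positivity) hre) (norm_nonneg _)
            ((norm_nonneg _).trans hEx)
      _ = M * (a / 4)⁻¹ * (n x ^ (δ - 1) * n x ^ (1 - δ + a / 2 - 1)) := by ring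
      _ = M * (a / 4)⁻¹ * n x ^ (a / 2 - 1) := by
          rw [← Real.rpow_add hx.1]
          ring_nf
  · filter_upwards [ae_mem_Ioc_of_map_eq hn hmap] with x hx s _
    have := ((hasDerivAt_id s).sub_const 1).const_cpow (c := (n x : ℂ))
      (.inl (Complex.ofReal_ne_zero.2 hx.1.ne'))
    simpa using this.const_mul (E x)

end Mellin

section ConeMeasure

open mixedEmbedding InfinitePlace Ideal
open scoped ENNReal NNReal Pointwise nonZeroDivisors

variable {K : Type*} [Field K] [NumberField K]

variable (K) in
lemma volume_normLeOne_ne_top : volume (fundamentalCone.normLeOne K) ≠ ⊤ := by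
  rw [fundamentalCone.volume_normLeOne]
  exact ENNReal.mul_ne_top (ENNReal.mul_ne_top (by simp) (by simp)) (by simp)

variable (K) in
lemma volume_fundamentalCone_inter_norm_le {c : ℝ} (hc : 0 < c) :
    volume (fundamentalCone K ∩ {x | mixedEmbedding.norm x ≤ c}) =
      ENNReal.ofReal c * volume (fundamentalCone.normLeOne K) := by
  set r : ℝ := c ^ (finrank ℚ K : ℝ)⁻¹
  have hr : 0 < r := Real.rpow_pos_of_pos hc _
  have hrc : r ^ finrank ℚ K = c := Real.rpow_inv_natCast_pow hc.le finrank_pos.ne'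
  have hscale : fundamentalCone K ∩ {x | mixedEmbedding.norm x ≤ c} =
      r • fundamentalCone.normLeOne K := by
    ext x
    rw [mem_smul_set_iff_inv_smul_mem₀ hr.ne']
    simp only [mem_inter_iff, mem_ofPred_eq, fundamentalCone.normLeOne]
    rw [fundamentalCone.smul_mem_iff_mem (inv_ne_zero hr.ne'), mixedEmbedding.norm_smul,
      abs_of_pos (inv_pos.2 hr), inv_pow, hrc, inv_mul_le_iff₀ hc, mul_one]
  rw [hscale, Measure.addHaar_smul, mixedEmbedding.finrank, hrc, abs_of_pos hc]

lemma measurable_twistedNorm (J : (Ideal (𝓞 K))⁰) : Measurable (twistedNorm J) :=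
  (mixedEmbedding.continuous_norm K).measurable.mul_const _

/-- The measure `N(J) dx` on the part of the fundamental cone where `x J` has at most the covolume
of `𝓞 K`. -/
noncomputable def coneMeasure (J : (Ideal (𝓞 K))⁰) : Measure (mixedSpace K) :=
  ENNReal.ofReal (absNorm (J : Ideal (𝓞 K))) •
    volume.restrict (fundamentalCone K ∩ {x | twistedNorm J x ≤ 1})

lemma coneMeasure_preimage_Iic (J : (Ideal (𝓞 K))⁰) (a : ℝ) :
    coneMeasure J (twistedNorm J ⁻¹' Iic a) =
      volume (fundamentalCone.normLeOne K) * ENNReal.ofReal (min a 1) := by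
  have hJ : 0 < (absNorm (J : Ideal (𝓞 K)) : ℝ) := zero_lt_one.trans_le (one_le_absNorm J)
  rw [coneMeasure, Measure.smul_apply, smul_eq_mul,
    Measure.restrict_apply (measurable_twistedNorm J measurableSet_Iic)]
  rcases le_or_gt a 0 with ha | ha
  · have hempty : twistedNorm J ⁻¹' Iic a ∩ (fundamentalCone K ∩ {x | twistedNorm J x ≤ 1}) = ∅ :=
      eq_empty_of_forall_notMem fun x ⟨hxa, hx, _⟩ =>
        (twistedNorm_pos J hx.2).not_ge (le_trans hxa ha)
    rw [hempty, measure_empty, ENNReal.ofReal_of_nonpos ((min_le_left _ _).trans ha), mul_zero,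
      mul_zero]
  · have hset : twistedNorm J ⁻¹' Iic a ∩ (fundamentalCone K ∩ {x | twistedNorm J x ≤ 1}) =
        fundamentalCone K ∩ {x | mixedEmbedding.norm x ≤ min a 1 / absNorm (J : Ideal (𝓞 K))} := by
      ext x
      simp only [mem_inter_iff, mem_preimage, mem_Iic, mem_ofPred_eq, le_div_iff₀ hJ, le_min_iff,
        twistedNorm]
      tauto
    have : 0 < min a 1 := lt_min ha one_pos
    rw [hset, volume_fundamentalCone_inter_norm_le K (by positivity), ← mul_assoc,
      ← ENNReal.ofReal_mul hJ.le, mul_div_cancel₀ _ hJ.ne', mul_comm]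

lemma map_twistedNorm_coneMeasure (J : (Ideal (𝓞 K))⁰) :
    (coneMeasure J).map (twistedNorm J) =
      volume (fundamentalCone.normLeOne K) • volume.restrict (Ioc 0 1) := by
  have hIic (a : ℝ) : (coneMeasure J).map (twistedNorm J) (Iic a) =
      volume (fundamentalCone.normLeOne K) * ENNReal.ofReal (min a 1) := by
    rw [Measure.map_apply (measurable_twistedNorm J) measurableSet_Iic, coneMeasure_preimage_Iic]
  have : IsFiniteMeasure (volume (fundamentalCone.normLeOne K) •
      volume.restrict (Ioc (0 : ℝ) 1)) := by
    refine Measure.smul_finite _ (volume_normLeOne_ne_top K)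
  refine (Measure.ext_of_Iic _ _ fun a => ?_).symm
  rw [hIic, Measure.smul_apply, Measure.restrict_apply measurableSet_Iic, inter_comm,
    Ioc_inter_Iic, Real.volume_Ioc, sub_zero, smul_eq_mul, min_comm]

lemma measurable_latticeCount (J : (Ideal (𝓞 K))⁰) : Measurable (latticeCount J) := by
  have := countable_ringOfIntegers K
  exact Measurable.tsum fun a => (measurable_one.indicator measurableSet_closedBall).comp
    (measurable_const_mul (mixedEmbedding K a.1))

lemma lintegral_coneMeasure_latticeCount (J : (Ideal (𝓞 K))⁰) (k : ℝ → ℝ≥0∞) :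
    ∫⁻ x, latticeCount J x * k (twistedNorm J x) ∂coneMeasure J =
      ENNReal.ofReal (absNorm (J : Ideal (𝓞 K))) *
        ∫⁻ x in fundamentalCone K, latticeCount J x * k (twistedNorm J x) := by
  have hle : MeasurableSet {x | twistedNorm J x ≤ 1} := measurable_twistedNorm J measurableSet_Iic
  rw [coneMeasure, lintegral_smul_measure, smul_eq_mul, inter_comm,
    ← Measure.restrict_restrict hle, ← lintegral_indicator hle]
  congr 1
  refine lintegral_congr fun x => ?_
  by_cases hx : twistedNorm J x ≤ 1
  · exact indicator_of_mem (s := {x | twistedNorm J x ≤ 1}) hx _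
  · rw [indicator_of_notMem (s := {x | twistedNorm J x ≤ 1}) hx,
      latticeCount_eq_zero (not_le.1 hx), zero_mul]

theorem sum_lintegral_coneMeasure_latticeCount {k : ℝ → ℝ≥0∞} (hk : Measurable k) :
    ∑ C : ClassGroup (𝓞 K), ∫⁻ x, latticeCount (inverseClassRep C) x *
        k (twistedNorm (inverseClassRep C) x) ∂coneMeasure (inverseClassRep C) =
      Units.torsionOrder K * ∑' I : {I : Ideal (𝓞 K) // I ≠ ⊥},
        (ENNReal.ofReal (absNorm I.1))⁻¹ *
          ∫⁻ y in Metric.closedBall (0 : mixedSpace K) 1,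
            k (mixedEmbedding.norm y / absNorm I.1) := by
  rw [← sum_lintegral_fundamentalCone_latticeCount hk]
  exact Finset.sum_congr rfl fun C _ => lintegral_coneMeasure_latticeCount _ k

end ConeMeasure

section ClassNumberVolume

open mixedEmbedding InfinitePlace Ideal
open scoped ENNReal NNReal nonZeroDivisors

variable {K : Type*} [Field K] [NumberField K]

lemma one_le_latticeCount {J : (Ideal (𝓞 K))⁰} {x : mixedSpace K} (hx : 0 < twistedNorm J x)
    (hxD : twistedNorm J x ≤ (4 * absDiscr K)⁻¹ ^ finrank ℚ K) : 1 ≤ latticeCount J x := by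
  have hD := one_le_absDiscr K
  obtain ⟨a, haJ, ha₀, ha⟩ := exists_ne_zero_norm_mul_le J (left_ne_zero_of_mul hx.ne')
  have hroot : twistedNorm J x ^ (finrank ℚ K : ℝ)⁻¹ ≤ (4 * absDiscr K)⁻¹ :=
    (Real.rpow_le_rpow hx.le hxD (by positivity)).trans_eq
      (Real.pow_rpow_inv_natCast (by positivity) finrank_pos.ne')
  have hmem : mixedEmbedding K a * x ∈ Metric.closedBall (0 : mixedSpace K) 1 := by
    rw [mem_closedBall_zero_iff, mul_comm]
    calc ‖x * mixedEmbedding K a‖ ≤ 4 * absDiscr K * (4 * absDiscr K)⁻¹ :=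
          ha.trans (by gcongr)
      _ = 1 := mul_inv_cancel₀ (by positivity)
  refine le_trans ?_ (ENNReal.le_tsum ⟨a, haJ, ha₀⟩)
  rw [indicator_of_mem hmem, Pi.one_apply]

lemma volume_normLeOne_mul_le_lintegral (J : (Ideal (𝓞 K))⁰) {t : ℝ} (ht : 0 < t)
    (htD : t ≤ (4 * absDiscr K)⁻¹ ^ finrank ℚ K) :
    volume (fundamentalCone.normLeOne K) * ENNReal.ofReal (t ^ 2 / 4) ≤
      ∫⁻ x, latticeCount J x * ENNReal.ofReal (twistedNorm J x) ∂coneMeasure J := by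
  have hD := one_le_absDiscr K
  have ht₁ : t ≤ 1 :=
    htD.trans (pow_le_one₀ (by positivity) (inv_le_one_of_one_le₀ (by linarith)))
  have hmeas : coneMeasure J (twistedNorm J ⁻¹' Ioc (t / 2) t) =
      volume (fundamentalCone.normLeOne K) * ENNReal.ofReal (t / 2) := by
    rw [← Measure.map_apply (measurable_twistedNorm J) measurableSet_Ioc,
      map_twistedNorm_coneMeasure, Measure.smul_apply, Measure.restrict_apply measurableSet_Ioc,
      inter_eq_left.2 (Ioc_subset_Ioc (by positivity) ht₁), Real.volume_Ioc, sub_half, smul_eq_mul]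
  calc volume (fundamentalCone.normLeOne K) * ENNReal.ofReal (t ^ 2 / 4)
      = ENNReal.ofReal (t / 2) * coneMeasure J (twistedNorm J ⁻¹' Ioc (t / 2) t) := by
        rw [hmeas, mul_left_comm, ← ENNReal.ofReal_mul (by positivity)]
        ring_nf
    _ ≤ ENNReal.ofReal (t / 2) * coneMeasure J {x | ENNReal.ofReal (t / 2) ≤
          latticeCount J x * ENNReal.ofReal (twistedNorm J x)} := by
        gcongr
        rintro x ⟨hx, hxt⟩
        calc ENNReal.ofReal (t / 2) ≤ 1 * ENNReal.ofReal (twistedNorm J x) := by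
              rw [one_mul]
              exact ENNReal.ofReal_le_ofReal hx.le
          _ ≤ latticeCount J x * ENNReal.ofReal (twistedNorm J x) := by
              gcongr
              exact one_le_latticeCount ((half_pos ht).trans hx) (hxt.trans htD)
    _ ≤ _ := mul_meas_ge_le_lintegral ((measurable_latticeCount J).mul
          (measurable_twistedNorm J).ennreal_ofReal) _

variable (K) in
lemma lintegral_closedBall_norm_div_le {c : ℝ} (hc : 0 < c) :
    ∫⁻ y in Metric.closedBall (0 : mixedSpace K) 1, ENNReal.ofReal (mixedEmbedding.norm y / c) ≤
      ENNReal.ofReal c⁻¹ * convexBodyLTFactor K := by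
  rw [← volume_closedBall_one K, ← setLIntegral_const]
  refine setLIntegral_mono measurable_const fun y hy => ENNReal.ofReal_le_ofReal ?_
  rw [inv_eq_one_div]
  gcongr
  exact norm_le_one_of_mem_closedBall hy

variable (K) in
lemma tsum_lintegral_closedBall_norm_div_le :
    ∑' I : {I : Ideal (𝓞 K) // I ≠ ⊥}, (ENNReal.ofReal (absNorm I.1))⁻¹ *
        ∫⁻ y in Metric.closedBall (0 : mixedSpace K) 1,
          ENNReal.ofReal (mixedEmbedding.norm y / absNorm I.1) ≤
      ENNReal.ofReal ((4 * ∑' m : ℕ, (m : ℝ) ^ (-2 : ℝ)) ^ finrank ℚ K) := by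
  have hterm (I : {I : Ideal (𝓞 K) // I ≠ ⊥}) : (ENNReal.ofReal (absNorm I.1))⁻¹ *
      ∫⁻ y in Metric.closedBall (0 : mixedSpace K) 1,
        ENNReal.ofReal (mixedEmbedding.norm y / absNorm I.1) ≤
      convexBodyLTFactor K * ENNReal.ofReal ((absNorm I.1 : ℝ) ^ (-2 : ℝ)) := by
    have hI : 0 < (absNorm I.1 : ℝ) :=
      Nat.cast_pos.2 (Nat.pos_of_ne_zero (absNorm_eq_zero_iff.not.2 I.2))
    grw [lintegral_closedBall_norm_div_le K hI]
    rw [← mul_assoc, mul_comm, ← ENNReal.ofReal_inv_of_pos hI, ← ENNReal.ofReal_mul (by positivity),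
      Real.rpow_neg hI.le, Real.rpow_two, sq, mul_inv]
  grw [ENNReal.tsum_le_tsum hterm]
  rw [ENNReal.tsum_mul_left, ← ENNReal.ofReal_tsum_of_nonneg (fun _ => by positivity)
    (summable_absNorm_rpow K one_lt_two), ← ENNReal.ofReal_coe_nnreal,
    ← ENNReal.ofReal_mul (by positivity), mul_pow]
  gcongr
  · exact convexBodyLTFactor_le K
  · exact tsum_absNorm_rpow_le K one_lt_two

/-- A bound, in degree `n` and absolute discriminant `D`, for the class number times the volume of
the fundamental cone in norm at most one, divided by the number of roots of unity. -/
noncomputable def classVolumeConstant (n : ℕ) (D : ℝ) : ℝ :=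
  4 * (64 * D ^ 2 * ∑' m : ℕ, (m : ℝ) ^ (-2 : ℝ)) ^ n

variable (K) in
theorem classNumber_mul_volume_normLeOne_le :
    classNumber K * (volume (fundamentalCone.normLeOne K)).toReal ≤
      Units.torsionOrder K * classVolumeConstant (finrank ℚ K) (absDiscr K) := by
  set n := finrank ℚ K
  set D := absDiscr K
  set V := volume (fundamentalCone.normLeOne K)
  set ζ₂ : ℝ := ∑' m : ℕ, (m : ℝ) ^ (-2 : ℝ)
  have hD : 0 < D := zero_lt_one.trans_le (one_le_absDiscr K)
  set t : ℝ := (4 * D)⁻¹ ^ n with ht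
  have : 0 ≤ ζ₂ := tsum_nonneg fun m => by positivity
  have hle : classNumber K * (V * ENNReal.ofReal (t ^ 2 / 4)) ≤
      Units.torsionOrder K * ENNReal.ofReal ((4 * ζ₂) ^ n) := by
    calc classNumber K * (V * ENNReal.ofReal (t ^ 2 / 4))
        = ∑ _ : ClassGroup (𝓞 K), V * ENNReal.ofReal (t ^ 2 / 4) := by
          rw [Finset.sum_const, Finset.card_univ, nsmul_eq_mul, classNumber]
      _ ≤ _ := Finset.sum_le_sum fun C _ =>
          volume_normLeOne_mul_le_lintegral (inverseClassRep C) (by positivity) le_rfl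
      _ = _ := sum_lintegral_coneMeasure_latticeCount ENNReal.measurable_ofReal
      _ ≤ _ := by gcongr; exact tsum_lintegral_closedBall_norm_div_le K
  have hreal := ENNReal.toReal_mono (by finiteness) hle
  simp only [ENNReal.toReal_mul, ENNReal.toReal_natCast] at hreal
  rw [ENNReal.toReal_ofReal (by positivity), ENNReal.toReal_ofReal (by positivity)] at hreal
  have htD : t ^ 2 * ((4 * D) ^ 2) ^ n = 1 := by
    rw [ht, ← pow_mul, mul_comm n, pow_mul, ← mul_pow, ← mul_pow,
      inv_mul_cancel₀ (by positivity), one_pow, one_pow]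
  calc classNumber K * V.toReal
      = classNumber K * (V.toReal * (t ^ 2 / 4)) * (4 * ((4 * D) ^ 2) ^ n) := by
        linear_combination -(classNumber K * V.toReal) * htD
    _ ≤ Units.torsionOrder K * (4 * ζ₂) ^ n * (4 * ((4 * D) ^ 2) ^ n) := by gcongr
    _ = Units.torsionOrder K * classVolumeConstant n D := by
        change _ = Units.torsionOrder K * (4 * (64 * D ^ 2 * ζ₂) ^ n)
        rw [mul_assoc, mul_left_comm ((4 * ζ₂) ^ n), ← mul_pow]
        ring_nf

end ClassNumberVolume

section ErrorMellin

open mixedEmbedding InfinitePlace Ideal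
open scoped ENNReal NNReal nonZeroDivisors

variable {K : Type*} [Field K] [NumberField K]

/-- The error of the lattice point count `latticeCount J x ≈ countDensity K / twistedNorm J x`. -/
noncomputable def countError (J : (Ideal (𝓞 K))⁰) (x : mixedSpace K) : ℝ :=
  (latticeCount J x).toReal - countDensity K / twistedNorm J x

/-- The Mellin transform, along the norm, of the error of the lattice point count. -/
noncomputable def errorMellin (J : (Ideal (𝓞 K))⁰) : ℂ → ℂ :=
  mellinAlong (coneMeasure J) (twistedNorm J) fun x => countError J x

variable (J : (Ideal (𝓞 K))⁰)

lemma measurable_countError : Measurable fun x => (countError J x : ℂ) :=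
  Complex.measurable_ofReal.comp <|
    (measurable_latticeCount J).ennreal_toReal.sub ((measurable_twistedNorm J).const_div _)

lemma ae_twistedNorm_mem_Ioc : ∀ᵐ x ∂coneMeasure J, twistedNorm J x ∈ Ioc 0 1 :=
  ae_mem_Ioc_of_map_eq (measurable_twistedNorm J) (map_twistedNorm_coneMeasure J)

lemma ae_norm_countError_le :
    ∀ᵐ x ∂coneMeasure J, ‖(countError J x : ℂ)‖ ≤
      countErrorConstant (finrank ℚ K) (absDiscr K) *
        twistedNorm J x ^ ((finrank ℚ K : ℝ)⁻¹ - 1) := by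
  filter_upwards [ae_twistedNorm_mem_Ioc J] with x hx
  rw [Complex.norm_real]
  exact abs_latticeCount_sub_le (left_ne_zero_of_mul hx.1.ne') hx.2

lemma differentiableOn_errorMellin :
    DifferentiableOn ℂ (errorMellin J) {s | 1 - (finrank ℚ K : ℝ)⁻¹ < s.re} :=
  differentiableOn_mellinAlong (measurable_twistedNorm J) (volume_normLeOne_ne_top K)
    (map_twistedNorm_coneMeasure J) (measurable_countError J) (ae_norm_countError_le J)

lemma norm_errorMellin_le {s : ℂ} (hs : 1 - (finrank ℚ K : ℝ)⁻¹ < s.re) :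
    ‖errorMellin J s‖ ≤ countErrorConstant (finrank ℚ K) (absDiscr K) *
      ((volume (fundamentalCone.normLeOne K)).toReal / (s.re - (1 - (finrank ℚ K : ℝ)⁻¹))) :=
  norm_mellinAlong_le (measurable_twistedNorm J) (volume_normLeOne_ne_top K)
    (map_twistedNorm_coneMeasure J) (ae_norm_countError_le J) hs

lemma ae_latticeCount_smul_cpow_eq (s : ℂ) :
    (fun x => (latticeCount J x).toReal • (twistedNorm J x : ℂ) ^ (s - 1)) =ᵐ[coneMeasure J]
      fun x => countDensity K * (twistedNorm J x : ℂ) ^ (s - 2) +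
        countError J x * (twistedNorm J x : ℂ) ^ (s - 1) := by
  filter_upwards [ae_twistedNorm_mem_Ioc J] with x hx
  have hx₀ : (twistedNorm J x : ℂ) ≠ 0 := Complex.ofReal_ne_zero.2 hx.1.ne'
  have hcpow : (twistedNorm J x : ℂ) ^ (s - 2) =
      (twistedNorm J x : ℂ) ^ (s - 1) / twistedNorm J x := by
    rw [← one_add_one_eq_two, ← sub_sub, Complex.cpow_sub _ _ hx₀, Complex.cpow_one]
  rw [hcpow, Complex.real_smul, countError, Complex.ofReal_sub, Complex.ofReal_div]
  ring

lemma integrable_and_integral_latticeCount_smul_cpow {s : ℂ} (hs : 1 < s.re) :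
    Integrable (fun x => (latticeCount J x).toReal • (twistedNorm J x : ℂ) ^ (s - 1))
        (coneMeasure J) ∧
      ∫ x, (latticeCount J x).toReal • (twistedNorm J x : ℂ) ^ (s - 1) ∂coneMeasure J =
        countDensity K * (volume (fundamentalCone.normLeOne K)).toReal / (s - 1) +
          errorMellin J s := by
  have hn := measurable_twistedNorm J
  have hmap := map_twistedNorm_coneMeasure J
  have hc := volume_normLeOne_ne_top K
  have hre : -1 < (s - 2).re := by
    rw [Complex.sub_re, Complex.re_ofNat]
    linarith
  have hs' : 1 - (finrank ℚ K : ℝ)⁻¹ < s.re := (sub_le_self _ (by positivity)).trans_lt hs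
  have hmain : Integrable (fun x => countDensity K * (twistedNorm J x : ℂ) ^ (s - 2))
      (coneMeasure J) := by
    refine .const_mul ((integrable_rpow_of_map_eq hn hc hmap hre).mono'
      (Measurable.aestronglyMeasurable (by fun_prop)) ?_) _
    filter_upwards [ae_twistedNorm_mem_Ioc J] with x hx
    rw [Complex.norm_cpow_eq_rpow_re_of_pos hx.1]
  have herror := integrable_mul_cpow_of_map_eq hn hc hmap (measurable_countError J)
    (ae_norm_countError_le J) hs'
  refine ⟨(hmain.add herror).congr (ae_latticeCount_smul_cpow_eq J s).symm, ?_⟩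
  rw [integral_congr_ae (ae_latticeCount_smul_cpow_eq J s), integral_add hmain herror,
    integral_const_mul, integral_cpow_of_map_eq hn hmap hre, ← mul_div_assoc, errorMellin,
    mellinAlong]
  ring_nf

end ErrorMellin

section ZetaIdentity

open mixedEmbedding InfinitePlace Ideal
open scoped ENNReal NNReal nonZeroDivisors

variable {K : Type*} [Field K] [NumberField K]

variable (K) in
/-- The Dedekind zeta function on `1 < s.re`, as a sum over the nonzero ideals. -/
noncomputable def idealZeta (s : ℂ) : ℂ :=
  ∑' I : {I : Ideal (𝓞 K) // I ≠ ⊥}, (absNorm (I : Ideal (𝓞 K)) : ℂ) ^ (-s)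

/-- The distribution of `twistedNorm` on the fundamental cone, weighted by lattice point counts,
for the ideal representing a class. -/
noncomputable def classDistribution (C : ClassGroup (𝓞 K)) : Measure ℝ :=
  ((coneMeasure (inverseClassRep C)).withDensity (latticeCount (inverseClassRep C))).map
    (twistedNorm (inverseClassRep C))

/-- The distribution of `mixedEmbedding.norm y / N(I)` for `y` in the unit ball, divided by
`N(I)`. -/
noncomputable def idealDistribution (I : Ideal (𝓞 K)) : Measure ℝ :=
  (ENNReal.ofReal (absNorm I))⁻¹ •
    (volume.restrict (Metric.closedBall (0 : mixedSpace K) 1)).map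
      fun y => mixedEmbedding.norm y / absNorm I

variable (K) in
lemma measurable_norm_div (c : ℝ) :
    Measurable fun y : mixedSpace K => mixedEmbedding.norm y / c :=
  (mixedEmbedding.continuous_norm K).measurable.div_const c

lemma lintegral_classDistribution (C : ClassGroup (𝓞 K)) {k : ℝ → ℝ≥0∞} (hk : Measurable k) :
    ∫⁻ t, k t ∂classDistribution C = ∫⁻ x, latticeCount (inverseClassRep C) x *
      k (twistedNorm (inverseClassRep C) x) ∂coneMeasure (inverseClassRep C) := by
  rw [classDistribution, lintegral_map hk (measurable_twistedNorm _)]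
  exact lintegral_withDensity_eq_lintegral_mul _ (measurable_latticeCount _)
    (hk.comp (measurable_twistedNorm _))

lemma lintegral_idealDistribution (I : Ideal (𝓞 K)) {k : ℝ → ℝ≥0∞} (hk : Measurable k) :
    ∫⁻ t, k t ∂idealDistribution I = (ENNReal.ofReal (absNorm I))⁻¹ *
      ∫⁻ y in Metric.closedBall (0 : mixedSpace K) 1, k (mixedEmbedding.norm y / absNorm I) := by
  rw [idealDistribution, lintegral_smul_measure, lintegral_map hk (measurable_norm_div K _),
    smul_eq_mul]

variable (K) in
lemma sum_classDistribution :
    ∑ C : ClassGroup (𝓞 K), classDistribution C = (Units.torsionOrder K : ℝ≥0∞) •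
      Measure.sum fun I : {I : Ideal (𝓞 K) // I ≠ ⊥} => idealDistribution I.1 := by
  refine Measure.ext_of_lintegral _ fun k hk => ?_
  rw [lintegral_finsetSum_measure, lintegral_smul_measure, lintegral_sum_measure, smul_eq_mul]
  simp only [lintegral_classDistribution _ hk, lintegral_idealDistribution _ hk]
  exact sum_lintegral_coneMeasure_latticeCount hk

lemma integrable_and_integral_classDistribution (C : ClassGroup (𝓞 K)) {s : ℂ} (hs : 1 < s.re) :
    Integrable (fun t : ℝ => (t : ℂ) ^ (s - 1)) (classDistribution C) ∧
      ∫ t, (t : ℂ) ^ (s - 1) ∂classDistribution C =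
        countDensity K * (volume (fundamentalCone.normLeOne K)).toReal / (s - 1) +
          errorMellin (inverseClassRep C) s := by
  set J := inverseClassRep C with hJ
  have hf : Measurable fun t : ℝ => (t : ℂ) ^ (s - 1) := by fun_prop
  have hn := measurable_twistedNorm J
  have hfin : ∀ᵐ x ∂coneMeasure J, latticeCount J x < ⊤ := by
    filter_upwards [ae_twistedNorm_mem_Ioc J] with x hx
    exact (latticeCount_ne_top (left_ne_zero_of_mul hx.1.ne')).lt_top
  obtain ⟨hint, heq⟩ := integrable_and_integral_latticeCount_smul_cpow J hs
  rw [classDistribution, ← hJ, integrable_map_measure hf.aestronglyMeasurable hn.aemeasurable,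
    integrable_withDensity_iff_integrable_smul' (measurable_latticeCount J) hfin,
    integral_map hn.aemeasurable hf.aestronglyMeasurable,
    integral_withDensity_eq_integral_toReal_smul (measurable_latticeCount J) hfin]
  exact ⟨hint, heq⟩

lemma ofReal_div_natCast_cpow {a : ℝ} (ha : 0 ≤ a) (m : ℕ) (s : ℂ) :
    ((a / m : ℝ) : ℂ) ^ s = (a : ℂ) ^ s * (m : ℂ) ^ (-s) := by
  rw [div_eq_mul_inv, Complex.ofReal_mul, Complex.mul_cpow_ofReal_nonneg ha (by positivity),
    Complex.ofReal_inv, Complex.ofReal_natCast, Complex.inv_cpow _ _ (by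
      rw [Complex.natCast_arg]
      exact Real.pi_pos.ne), Complex.cpow_neg]

lemma integral_idealDistribution {I : Ideal (𝓞 K)} (hI : I ≠ ⊥) {s : ℂ} (hs : 0 < s.re) :
    ∫ t, (t : ℂ) ^ (s - 1) ∂idealDistribution I =
      (convexBodyLTFactor K : ℝ) / s ^ (nrRealPlaces K + nrComplexPlaces K) *
        (absNorm I : ℂ) ^ (-s) := by
  have hf : Measurable fun t : ℝ => (t : ℂ) ^ (s - 1) := by fun_prop
  have hI₀ : (absNorm I : ℂ) ≠ 0 := Nat.cast_ne_zero.2 (absNorm_eq_zero_iff.not.2 hI)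
  have hcpow : (absNorm I : ℂ) ^ (-(s - 1)) = absNorm I * (absNorm I : ℂ) ^ (-s) := by
    rw [neg_sub, sub_eq_add_neg, Complex.cpow_add _ _ hI₀, Complex.cpow_one]
  rw [idealDistribution, integral_smul_measure,
    integral_map (measurable_norm_div K _).aemeasurable hf.aestronglyMeasurable]
  simp only [ofReal_div_natCast_cpow (mixedEmbedding.norm_nonneg _)]
  rw [integral_mul_const, integral_closedBall_norm_cpow K hs, hcpow, Complex.real_smul,
    ENNReal.toReal_inv, ENNReal.toReal_ofReal (by positivity), Complex.ofReal_inv,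
    Complex.ofReal_natCast]
  field_simp

variable (K) in
theorem torsionOrder_mul_idealZeta {s : ℂ} (hs : 1 < s.re) :
    Units.torsionOrder K * ((convexBodyLTFactor K : ℝ) /
        s ^ (nrRealPlaces K + nrComplexPlaces K) * idealZeta K s) =
      classNumber K *
          (countDensity K * (volume (fundamentalCone.normLeOne K)).toReal / (s - 1)) +
        ∑ C : ClassGroup (𝓞 K), errorMellin (inverseClassRep C) s := by
  have hclass (C : ClassGroup (𝓞 K)) := integrable_and_integral_classDistribution C hs
  have hint : Integrable (fun t : ℝ => (t : ℂ) ^ (s - 1))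
      (∑ C : ClassGroup (𝓞 K), classDistribution C) :=
    integrable_finsetSum_measure.2 fun C _ => (hclass C).1
  have hw : (Units.torsionOrder K : ℝ≥0∞) ≠ 0 := Nat.cast_ne_zero.2 (Units.torsionOrder_pos K).ne'
  calc _ = ∫ t, (t : ℂ) ^ (s - 1) ∂∑ C : ClassGroup (𝓞 K), classDistribution C := by
        rw [sum_classDistribution, integrable_smul_measure hw (by simp)] at hint
        rw [sum_classDistribution, integral_smul_measure,
          ← (hasSum_integral_measure hint).tsum_eq, Complex.real_smul, ENNReal.toReal_natCast,
          Complex.ofReal_natCast, idealZeta, ← tsum_mul_left]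
        exact congrArg _ (tsum_congr fun I =>
          (integral_idealDistribution I.2 (zero_lt_one.trans hs)).symm)
    _ = _ := by
        rw [integral_finsetSum_measure fun C _ => (hclass C).1,
          Finset.sum_congr rfl fun C _ => (hclass C).2, Finset.sum_add_distrib, Finset.sum_const,
          Finset.card_univ, nsmul_eq_mul, classNumber]

end ZetaIdentity

section GrowthConstant

/-- A bound, in degree `n` and absolute discriminant `D`, for `reducedZeta` relative to `s + 1`
on the half-plane `1 - (2 * n)⁻¹ ≤ s.re`. -/
noncomputable def growthConstant (n : ℕ) (D : ℝ) : ℝ :=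
  classVolumeConstant n D * (8 ^ n + 2 * n * countErrorConstant n D) + 1

/-- The exponent of the discriminant in the bound for `growthConstant`. -/
def growthExponent (n : ℕ) : ℕ := 2 * n + (n + 1) * n

variable (n : ℕ) {D : ℝ}

lemma countErrorConstant_nonneg (hD : 0 ≤ D) : 0 ≤ countErrorConstant n D := by
  have hρ := coveringConstant_nonneg n hD
  unfold countErrorConstant
  positivity

lemma classVolumeConstant_nonneg (D : ℝ) : 0 ≤ classVolumeConstant n D := by
  have : 0 ≤ ∑' m : ℕ, (m : ℝ) ^ (-2 : ℝ) := tsum_nonneg fun m => by positivity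
  unfold classVolumeConstant
  positivity

lemma one_le_growthConstant (hD : 0 ≤ D) : 1 ≤ growthConstant n D := by
  have hM := countErrorConstant_nonneg n hD
  have hB := classVolumeConstant_nonneg n D
  exact le_add_of_nonneg_left (by positivity)

lemma coveringConstant_eq (D : ℝ) : coveringConstant n D = coveringConstant n 1 * D ^ (n + 1) := by
  simp only [coveringConstant, mul_pow]
  ring

lemma classVolumeConstant_eq (D : ℝ) :
    classVolumeConstant n D = classVolumeConstant n 1 * D ^ (2 * n) := by
  simp only [classVolumeConstant, mul_pow, pow_mul]
  ring

lemma countErrorConstant_le (hD : 1 ≤ D) :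
    countErrorConstant n D ≤ countErrorConstant n 1 * D ^ ((n + 1) * n) := by
  have hρ := coveringConstant_nonneg n zero_le_one
  calc countErrorConstant n D = 8 ^ n * (1 + coveringConstant n 1 * D ^ (n + 1)) ^ n + 1 := by
        rw [countErrorConstant, coveringConstant_eq]
    _ ≤ 8 ^ n * (D ^ (n + 1) + coveringConstant n 1 * D ^ (n + 1)) ^ n + D ^ ((n + 1) * n) := by
        gcongr <;> exact one_le_pow₀ hD
    _ = countErrorConstant n 1 * D ^ ((n + 1) * n) := by
        rw [← one_add_mul, mul_pow, ← pow_mul, countErrorConstant]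
        ring

lemma growthConstant_le (hD : 1 ≤ D) :
    growthConstant n D ≤ growthConstant n 1 * D ^ growthExponent n := by
  have hB := classVolumeConstant_nonneg n 1
  have hM := countErrorConstant_le n hD
  calc growthConstant n D
      = classVolumeConstant n 1 * D ^ (2 * n) * (8 ^ n + 2 * n * countErrorConstant n D) + 1 := by
        rw [growthConstant, classVolumeConstant_eq]
    _ ≤ classVolumeConstant n 1 * D ^ (2 * n) * (8 ^ n * D ^ ((n + 1) * n) +
          2 * n * (countErrorConstant n 1 * D ^ ((n + 1) * n))) + D ^ growthExponent n := by
        gcongr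
        · exact le_mul_of_one_le_right (by positivity) (one_le_pow₀ hD)
        · exact one_le_pow₀ hD
    _ = growthConstant n 1 * D ^ growthExponent n := by
        rw [growthConstant, growthExponent, pow_add]
        ring

lemma growthConstant_rpow_le (hD : 1 ≤ D) {θ ε : ℝ} (hθ : 0 ≤ θ) (hε : growthExponent n * θ ≤ ε) :
    growthConstant n D ^ θ ≤ growthConstant n 1 ^ θ * D ^ ε := by
  have hD₀ : 0 ≤ D := zero_le_one.trans hD
  have hL : 0 ≤ growthConstant n 1 := zero_le_one.trans (one_le_growthConstant n zero_le_one)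
  calc growthConstant n D ^ θ
      ≤ (growthConstant n 1 * D ^ (growthExponent n : ℝ)) ^ θ := by
        rw [Real.rpow_natCast]
        gcongr
        · exact zero_le_one.trans (one_le_growthConstant n hD₀)
        · exact growthConstant_le n hD
    _ = growthConstant n 1 ^ θ * D ^ (growthExponent n * θ) := by
        rw [Real.mul_rpow hL (by positivity), ← Real.rpow_mul hD₀]
    _ ≤ growthConstant n 1 ^ θ * D ^ ε := by gcongr

end GrowthConstant

section ZetaBounds

open mixedEmbedding InfinitePlace Ideal
open scoped nonZeroDivisors

variable (K : Type*) [Field K] [NumberField K]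

lemma norm_idealZeta_le {s : ℂ} (hs : 1 < s.re) :
    ‖idealZeta K s‖ ≤ (∑' n : ℕ, (n : ℝ) ^ (-s.re)) ^ finrank ℚ K := by
  have hnorm (I : {I : Ideal (𝓞 K) // I ≠ ⊥}) :
      ‖(absNorm I.1 : ℂ) ^ (-s)‖ = (absNorm I.1 : ℝ) ^ (-s.re) := by
    rw [Complex.norm_natCast_cpow_of_pos (Nat.pos_of_ne_zero (absNorm_eq_zero_iff.not.2 I.2)),
      Complex.neg_re]
  refine (norm_tsum_le_tsum_norm ?_).trans ?_ <;> simp only [hnorm]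
  · exact summable_absNorm_rpow K hs
  · exact tsum_absNorm_rpow_le K hs

/-- The analytic continuation of `(s - 1) * idealZeta K s / s ^ r` to the half-plane
`1 - (finrank ℚ K)⁻¹ < s.re`, where `r` is the number of infinite places of `K`. -/
noncomputable def reducedZeta (s : ℂ) : ℂ :=
  (Units.torsionOrder K * (convexBodyLTFactor K : ℝ) : ℂ)⁻¹ *
    (classNumber K * (countDensity K * (volume (fundamentalCone.normLeOne K)).toReal) +
      (s - 1) * ∑ C : ClassGroup (𝓞 K), errorMellin (inverseClassRep C) s)

lemma sub_one_mul_idealZeta {s : ℂ} (hs : 1 < s.re) :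
    (s - 1) * idealZeta K s = s ^ (nrRealPlaces K + nrComplexPlaces K) * reducedZeta K s := by
  have hs₀ : s ≠ 0 := Complex.ne_zero_of_one_lt_re hs
  have hs₁ : s - 1 ≠ 0 := sub_ne_zero.2 fun h => by simp [h] at hs
  have hw : (Units.torsionOrder K : ℂ) ≠ 0 := Nat.cast_ne_zero.2 (Units.torsionOrder_pos K).ne'
  have hv : ((convexBodyLTFactor K : ℝ) : ℂ) ≠ 0 :=
    Complex.ofReal_ne_zero.2 (zero_lt_one.trans_le (one_le_coe_convexBodyLTFactor K)).ne'
  have hzeta := torsionOrder_mul_idealZeta K hs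
  rw [reducedZeta]
  generalize ∑ C : ClassGroup (𝓞 K), errorMellin (inverseClassRep C) s = S at hzeta ⊢
  field_simp at hzeta ⊢
  linear_combination hzeta

lemma differentiableAt_reducedZeta {s : ℂ} (hs : 1 - (finrank ℚ K : ℝ)⁻¹ < s.re) :
    DifferentiableAt ℂ (reducedZeta K) s := by
  have hopen : IsOpen {s : ℂ | 1 - (finrank ℚ K : ℝ)⁻¹ < s.re} :=
    isOpen_lt continuous_const Complex.continuous_re
  have hsum : DifferentiableAt ℂ
      (fun s => ∑ C : ClassGroup (𝓞 K), errorMellin (inverseClassRep C) s) s :=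
    .fun_sum fun C _ => (differentiableOn_errorMellin _).differentiableAt (hopen.mem_nhds hs)
  exact (((differentiableAt_id.sub_const 1).mul hsum).const_add _).const_mul _

lemma norm_sum_errorMellin_le {s : ℂ} (hs : 1 - (2 * finrank ℚ K : ℝ)⁻¹ ≤ s.re) :
    ‖∑ C : ClassGroup (𝓞 K), errorMellin (inverseClassRep C) s‖ ≤
      classNumber K * (volume (fundamentalCone.normLeOne K)).toReal *
        (2 * finrank ℚ K * countErrorConstant (finrank ℚ K) (absDiscr K)) := by
  set n := finrank ℚ K
  set V := (volume (fundamentalCone.normLeOne K)).toReal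
  set M := countErrorConstant n (absDiscr K)
  have hM : 0 ≤ M := countErrorConstant_nonneg n (zero_le_one.trans (one_le_absDiscr K))
  have hn : (0 : ℝ) < n := Nat.cast_pos.2 finrank_pos
  have hgap : (2 * n : ℝ)⁻¹ ≤ s.re - (1 - (n : ℝ)⁻¹) := by
    have : (n : ℝ)⁻¹ = 2 * (2 * n : ℝ)⁻¹ := by field_simp
    linarith
  have hgap₀ : 0 < (2 * n : ℝ)⁻¹ := by positivity
  have herror (C : ClassGroup (𝓞 K)) : ‖errorMellin (inverseClassRep C) s‖ ≤ V * (2 * n * M) :=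
    calc ‖errorMellin (inverseClassRep C) s‖ ≤ M * (V / (s.re - (1 - (n : ℝ)⁻¹))) :=
          norm_errorMellin_le _ (by linarith)
      _ ≤ M * (V / (2 * n : ℝ)⁻¹) := by gcongr
      _ = V * (2 * n * M) := by
          rw [div_inv_eq_mul]
          ring
  refine (norm_sum_le_of_le _ fun C _ => herror C).trans_eq ?_
  rw [Finset.sum_const, Finset.card_univ, nsmul_eq_mul, classNumber, ← mul_assoc]

lemma norm_classNumber_mul_add_sum_errorMellin_le {s : ℂ}
    (hs : 1 - (2 * finrank ℚ K : ℝ)⁻¹ ≤ s.re) :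
    ‖(classNumber K * (countDensity K * (volume (fundamentalCone.normLeOne K)).toReal) +
      (s - 1) * ∑ C : ClassGroup (𝓞 K), errorMellin (inverseClassRep C) s : ℂ)‖ ≤
      classNumber K * (volume (fundamentalCone.normLeOne K)).toReal * (8 ^ finrank ℚ K +
        2 * finrank ℚ K * countErrorConstant (finrank ℚ K) (absDiscr K)) * ‖s + 1‖ := by
  have hsum := norm_sum_errorMellin_le K hs
  have hκ := countDensity_le K
  have hκ₀ := (countDensity_pos K).le
  set n := finrank ℚ K
  set V := (volume (fundamentalCone.normLeOne K)).toReal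
  set M := countErrorConstant n (absDiscr K)
  set S := ∑ C : ClassGroup (𝓞 K), errorMellin (inverseClassRep C) s
  have hs₀ : 0 ≤ s.re := by
    have hn : (1 : ℝ) ≤ n := Nat.one_le_cast.2 finrank_pos
    have : (2 * n : ℝ)⁻¹ ≤ 1 := inv_le_one_of_one_le₀ (by linarith)
    linarith
  calc ‖(classNumber K * (countDensity K * V) + (s - 1) * S : ℂ)‖
      ≤ ‖((classNumber K * (countDensity K * V) : ℝ) : ℂ)‖ + ‖(s - 1) * S‖ := by
        push_cast
        exact norm_add_le _ _
    _ = classNumber K * V * countDensity K + ‖s - 1‖ * ‖S‖ := by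
        rw [Complex.norm_of_nonneg (by positivity), norm_mul]
        ring
    _ ≤ classNumber K * V * 8 ^ n * ‖s + 1‖ + ‖s + 1‖ * (classNumber K * V * (2 * n * M)) := by
        refine add_le_add ((mul_le_mul_of_nonneg_left hκ (by positivity)).trans ?_) ?_
        · exact le_mul_of_one_le_right (by positivity) (one_le_norm_add_one hs₀)
        · gcongr
          exact norm_sub_one_le_norm_add_one hs₀
    _ = classNumber K * V * (8 ^ n + 2 * n * M) * ‖s + 1‖ := by ring

lemma norm_reducedZeta_le {s : ℂ} (hs : 1 - (2 * finrank ℚ K : ℝ)⁻¹ ≤ s.re) :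
    ‖reducedZeta K s‖ ≤ growthConstant (finrank ℚ K) (absDiscr K) * ‖s + 1‖ := by
  have hnum := norm_classNumber_mul_add_sum_errorMellin_le K hs
  have hv := one_le_coe_convexBodyLTFactor K
  have hhV := classNumber_mul_volume_normLeOne_le K
  have hw : (0 : ℝ) < Units.torsionOrder K := Nat.cast_pos.2 (Units.torsionOrder_pos K)
  have hM := countErrorConstant_nonneg (finrank ℚ K) (zero_le_one.trans (one_le_absDiscr K))
  set n := finrank ℚ K
  set D := absDiscr K
  set w : ℝ := (Units.torsionOrder K : ℝ)
  calc ‖reducedZeta K s‖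
      ≤ w⁻¹ * (w * classVolumeConstant n D * (8 ^ n + 2 * n * countErrorConstant n D) *
        ‖s + 1‖) := by
        rw [reducedZeta, norm_mul, norm_inv, norm_mul, Complex.norm_natCast,
          Complex.norm_of_nonneg (by positivity)]
        gcongr
        · exact le_mul_of_one_le_right hw.le hv
        · exact hnum.trans (by gcongr)
    _ = classVolumeConstant n D * (8 ^ n + 2 * n * countErrorConstant n D) * ‖s + 1‖ := by
        field_simp
    _ ≤ growthConstant n D * ‖s + 1‖ := by
        gcongr
        exact le_add_of_nonneg_right zero_le_one

lemma nrRealPlaces_add_nrComplexPlaces_le : nrRealPlaces K + nrComplexPlaces K ≤ finrank ℚ K := by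
  rw [← card_add_two_mul_card_eq_rank K]
  omega

end ZetaBounds

section LaurentCoefficients

open InfinitePlace

variable {K : Type*} [Field K] [NumberField K]

theorem norm_iteratedDeriv_le_of_eqOn_idealZeta {g : ℂ → ℂ} (hg : AnalyticAt ℂ g 1)
    (hgζ : ∀ s : ℂ, 1 < s.re → g s = (s - 1) * idealZeta K s) (j : ℕ) {η : ℝ} (hη : 0 < η)
    (hηK : η < (2 * finrank ℚ K : ℝ)⁻¹) :
    ‖iteratedDeriv j g 1‖ / j.factorial ≤ 3 * 2 ^ finrank ℚ K *
      (growthConstant (finrank ℚ K) (absDiscr K) ^ (2 * η / (2 * finrank ℚ K : ℝ)⁻¹) *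
        max 1 ((∑' n : ℕ, (n : ℝ) ^ (-(1 + η))) ^ finrank ℚ K)) / η ^ j := by
  set n := finrank ℚ K
  set r := nrRealPlaces K + nrComplexPlaces K
  have hn : (1 : ℝ) ≤ n := Nat.one_le_cast.2 finrank_pos
  have hδ : (2 * n : ℝ)⁻¹ < (n : ℝ)⁻¹ := inv_strictAnti₀ (by linarith) (by linarith)
  have hdiff (s : ℂ) (hs : 1 - (2 * n : ℝ)⁻¹ ≤ s.re) : DifferentiableAt ℂ (reducedZeta K) s :=
    differentiableAt_reducedZeta K (by linarith)
  have hG : AnalyticAt ℂ (fun s => s ^ r * reducedZeta K s) 1 := by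
    have hopen : IsOpen {s : ℂ | 1 - (2 * n : ℝ)⁻¹ < s.re} :=
      isOpen_lt continuous_const Complex.continuous_re
    refine (analyticAt_id.pow r).mul (DifferentiableOn.analyticAt (fun s hs =>
      (hdiff s (le_of_lt hs)).differentiableWithinAt) (hopen.mem_nhds ?_))
    simpa using finrank_pos
  have hgG : g =ᶠ[𝓝 1] fun s => s ^ r * reducedZeta K s :=
    eventuallyEq_nhds_of_eqOn_halfPlane hg hG fun s hs =>
      (hgζ s hs).trans (sub_one_mul_idealZeta K hs)
  have hL : 1 ≤ growthConstant n (absDiscr K) :=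
    one_le_growthConstant n (zero_le_one.trans (one_le_absDiscr K))
  rw [hgG.iteratedDeriv_eq]
  refine (norm_iteratedDeriv_pow_mul_one_le (M := max 1 ((∑' n : ℕ, (n : ℝ) ^ (-(1 + η))) ^ n))
    r j hη hηK (inv_le_one_of_one_le₀ (by linarith)) hL (le_max_left _ _) hdiff
    (fun s hs => norm_reducedZeta_le K hs) fun s hs => ?_).trans ?_
  · have hs₁ : 1 < s.re := by linarith
    rw [← sub_one_mul_idealZeta K hs₁, norm_mul, mul_comm, ← hs]
    gcongr
    exact (norm_idealZeta_le K hs₁).trans (le_max_right _ _)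
  · gcongr
    · exact one_le_two
    · exact nrRealPlaces_add_nrComplexPlaces_le K

end LaurentCoefficients

end DedekindLaurent

open DedekindLaurent in
theorem stmt_12_general.{u} (d j : ℕ) (hd : 1 ≤ d) (ε : ℝ) (hε : 0 < ε) :
    ∃ C > (0 : ℝ), ∀ (K : Type u) [Field K] [NumberField K], Module.finrank ℚ K = d →
      ∀ g : ℂ → ℂ, AnalyticAt ℂ g 1 →
        (∀ s : ℂ, 1 < s.re →
          g s = (s - 1) * ∑' I : {I : Ideal (𝓞 K) // I ≠ ⊥},
            (Ideal.absNorm (I : Ideal (𝓞 K)) : ℂ) ^ (-s)) →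
        ‖iteratedDeriv j g 1‖ / (Nat.factorial j) ≤ C * |(NumberField.discr K : ℝ)| ^ ε := by
  set δ : ℝ := (2 * d : ℝ)⁻¹
  have hδ : 0 < δ := by positivity
  have hA : (0 : ℝ) < growthExponent d := Nat.cast_pos.2 (by unfold growthExponent; positivity)
  obtain ⟨η, hη, hη_min⟩ :=
    exists_between (lt_min hδ (by positivity : 0 < ε * δ / (2 * growthExponent d)))
  obtain ⟨hηδ, hηε⟩ := lt_min_iff.1 hη_min
  have hexp : growthExponent d * (2 * η / δ) ≤ ε := by
    rw [lt_div_iff₀ (by positivity)] at hηε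
    rw [← mul_div_assoc, div_le_iff₀ hδ]
    linarith
  have hL := zero_lt_one.trans_le (one_le_growthConstant d zero_le_one)
  set L := growthConstant d 1
  set M := max 1 ((∑' n : ℕ, (n : ℝ) ^ (-(1 + η))) ^ d)
  refine ⟨3 * 2 ^ d * (L ^ (2 * η / δ) * M) / η ^ j, by positivity, ?_⟩
  rintro K _ _ rfl g hg hgζ
  calc _ ≤ _ := norm_iteratedDeriv_le_of_eqOn_idealZeta hg hgζ j hη hηδ
    _ ≤ 3 * 2 ^ Module.finrank ℚ K * (L ^ (2 * η / δ) * absDiscr K ^ ε * M) / η ^ j := by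
        gcongr
        exact growthConstant_rpow_le _ (one_le_absDiscr K) (by positivity) hexp
    _ = 3 * 2 ^ Module.finrank ℚ K * (L ^ (2 * η / δ) * M) / η ^ j * absDiscr K ^ ε := by ring

/-- For every number field `F` of degree `d`, every `ε > 0` and every integer `k ≥ -1`, the
`k`-th Laurent coefficient of the Dedekind zeta function at `s = 1` satisfies
`|λ_k^F| ≪_{d,ε,k} D_F^ε`.  The Laurent coefficients are expressed via the entire
continuation `g(s) = (s-1)ζ_F(s)` (with `ζ_F(s) = Σ_{0 ≠ I ⊆ O_F} N(I)^{-s}` for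
`Re s > 1`) as `λ_{j-1}^F = g^{(j)}(1)/j!` for `j = k + 1 ≥ 0`. -/
theorem stmt_12 (d j : ℕ) (hd : 1 ≤ d) (ε : ℝ) (hε : 0 < ε) :
    ∃ C > (0 : ℝ), ∀ (K : Type) [Field K] [NumberField K], Module.finrank ℚ K = d →
      ∀ g : ℂ → ℂ, Differentiable ℂ g →
        (∀ s : ℂ, 1 < s.re →
          g s = (s - 1) * ∑' I : {I : Ideal (𝓞 K) // I ≠ ⊥},
            (Ideal.absNorm (I : Ideal (𝓞 K)) : ℂ) ^ (-s)) →
        ‖iteratedDeriv j g 1‖ / (Nat.factorial j) ≤ C * |(NumberField.discr K : ℝ)| ^ ε := by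
  obtain ⟨C, hC, hbound⟩ := stmt_12_general d j hd ε hε
  exact ⟨C, hC, fun K _ _ hK g hg => hbound K hK g (hg.analyticAt 1)⟩
end
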